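/- Let S(X) denote the number of integers q ≤ X with q ≡ 1 (mod 4) for which the Erdős conjecture holds mod q. Then liminf_{X→∞} S(X)/(X/4) ≥ 0.67. -/

import Mathlib

open Filter Topology Finset

/-- `f : ℕ → ℤ` is Erdősian mod `q`: periodic with period `q`, takes values `±1`
off multiples of `q`, and `0` on multiples of `q`. -/
def IsErdosian (q : ℕ) (f : ℕ → ℤ) : Prop :=
  (∀ n : ℕ, 1 ≤ n → f (n + q) = f n) ∧
  (∀ n : ℕ, 1 ≤ n → ¬ q ∣ n → f n = 1 ∨ f n = -1) ∧
  (∀ n : ℕ, 1 ≤ n → q ∣ n → f n = 0)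

/-- The Erdős conjecture is false mod `q`: there is an Erdősian function mod `q`
whose partial sums `∑_{n=1}^N f(n)/n` tend to `0`. -/
def ErdosConjectureFalse (q : ℕ) : Prop :=
  ∃ f : ℕ → ℤ, IsErdosian q f ∧
    Tendsto (fun N : ℕ => ∑ n ∈ Finset.Icc 1 N, (f n : ℝ) / n) atTop (nhds 0)

/-- The Erdős conjecture holds (is true) mod `q`. -/
def ErdosConjectureHolds (q : ℕ) : Prop := ¬ ErdosConjectureFalse q

/-!
Let `f` be Erdősian mod `q` with `∑ f(n)/n = 0`. Fourier expansion turns the sum into a linear form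
in the logarithms of the numbers `1 - ζ`, `ζ ^ q = 1`, with coefficients in `ℚ(ζ)`. A transcendence
argument in the style of Baker shows that the vanishing of such a form is preserved when an
automorphism is applied to its coefficients; hence `∑ f(hn)/n = 0` for every `h` prime to `q`.
Decompose `f` into its components under the characters `χ` of `(ℤ/q)ˣ`. The Dirichlet series of a
component is `L(s, χ)` times a sum over the `b` all of whose prime factors divide `q`, and as
`L(1, χ) ≠ 0` we get `∑ f(b)/b = 0` over these `b`. Since `|f(1)| = 1` and `|f| ≤ 1`, this forces
`2 ≤ ∑ 1/b = q/φ(q)`.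

The mean value of `q/φ(q)` over `q ≡ 1 (mod 4)` is `∏ (1 + 1/(p(p - 1)))` over the odd primes, which
is at most `1.324`. As `q/φ(q) ≥ 1`, Markov's inequality bounds the density of the `q` with
`q/φ(q) ≥ 2` by `0.324`.
-/

/-! ### Entire functions with many zeros -/

theorem exists_eq_sub_pow_mul_of_le_analyticOrderAt {n : ℕ} {g : ℂ → ℂ} (hg : Differentiable ℂ g)
    {a : ℂ} (hn : (n : ℕ∞) ≤ analyticOrderAt g a) :
    ∃ k : ℂ → ℂ, Differentiable ℂ k ∧ ∀ z, g z = (z - a) ^ n * k z := by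
  induction n generalizing g with
  | zero => exact ⟨g, hg, by simp⟩
  | succ n ih =>
    have hga : g a = 0 := apply_eq_zero_of_analyticOrderAt_ne_zero fun h => by simp [h] at hn
    have hslope : Differentiable ℂ (dslope g a) := differentiableOn_univ.1 <|
      (Complex.differentiableOn_dslope univ_mem).2 hg.differentiableOn
    have hmul : g = (fun z => z - a) * dslope g a := by
      funext z
      simpa [hga] using (sub_smul_dslope g a z).symm
    have hord : (n : ℕ∞) ≤ analyticOrderAt (dslope g a) a := by
      have hlin : analyticOrderAt (fun z : ℂ => z - a) a = 1 := by simp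
      rw [hmul, analyticOrderAt_mul (by fun_prop) (hslope.analyticAt a), hlin, Nat.cast_succ,
        add_comm] at hn
      exact (ENat.add_le_add_iff_left (by simp)).1 hn
    obtain ⟨k, hk, hgk⟩ := ih hslope hord
    exact ⟨k, hk, fun z => by rw [hmul, Pi.mul_apply, hgk z]; ring⟩

theorem exists_eq_prod_sub_pow_mul {n : ℕ} {g : ℂ → ℂ} (hg : Differentiable ℂ g) {s : Finset ℂ}
    (hn : ∀ a ∈ s, (n : ℕ∞) ≤ analyticOrderAt g a) :
    ∃ k : ℂ → ℂ, Differentiable ℂ k ∧ ∀ z, g z = (∏ a ∈ s, (z - a)) ^ n * k z := by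
  induction s using Finset.induction_on with
  | empty => exact ⟨g, hg, by simp⟩
  | insert b s hb ih =>
    obtain ⟨k, hk, hgk⟩ := ih fun a ha => hn a (mem_insert_of_mem ha)
    have hprod : AnalyticAt ℂ (fun z => (∏ a ∈ s, (z - a)) ^ n) b :=
      Differentiable.analyticAt (by fun_prop) b
    have hprod_ne : (∏ a ∈ s, (b - a)) ^ n ≠ 0 :=
      pow_ne_zero _ <| prod_ne_zero_iff.2 fun a ha => sub_ne_zero.2 fun h => hb (h ▸ ha)
    have hord : (n : ℕ∞) ≤ analyticOrderAt k b := by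
      have h := hn b (mem_insert_self b s)
      have hg_eq : g = (fun z => (∏ a ∈ s, (z - a)) ^ n) * k := funext hgk
      rwa [hg_eq, analyticOrderAt_mul hprod (hk.analyticAt b),
        hprod.analyticOrderAt_eq_zero.2 hprod_ne, zero_add] at h
    obtain ⟨k', hk', hkk'⟩ := exists_eq_sub_pow_mul_of_le_analyticOrderAt hk hord
    refine ⟨k', hk', fun z => ?_⟩
    rw [hgk, hkk', prod_insert hb, mul_pow]
    ring

theorem norm_le_mul_pow_of_le_analyticOrderAt {n : ℕ} {g : ℂ → ℂ} (hg : Differentiable ℂ g)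
    {s : Finset ℂ} (hn : ∀ a ∈ s, (n : ℕ∞) ≤ analyticOrderAt g a) {M R ρ : ℝ} (hR : 0 < R)
    (hs : ∀ a ∈ s, ‖a‖ ≤ R / 2) (hM : ∀ z : ℂ, ‖z‖ ≤ R → ‖g z‖ ≤ M) {z : ℂ} (hz : ‖z‖ ≤ R)
    (hρ : ∀ a ∈ s, ‖z - a‖ ≤ ρ) :
    ‖g z‖ ≤ M * (2 * ρ / R) ^ (n * #s) := by
  obtain ⟨k, hk, hgk⟩ := exists_eq_prod_sub_pow_mul hg hn
  have : 0 ≤ M := (norm_nonneg _).trans (hM 0 (by simpa using hR.le))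
  have hk_le : ‖k z‖ ≤ M / (R / 2) ^ (n * #s) := by
    refine Complex.norm_le_of_forall_mem_frontier_norm_le (U := Metric.ball 0 R)
      Metric.isBounded_ball hk.diffContOnCl (fun w hw => ?_) ?_
    · rw [frontier_ball _ hR.ne', mem_sphere_zero_iff_norm] at hw
      rw [le_div_iff₀ (by positivity), mul_comm n, pow_mul]
      calc ‖k w‖ * ((R / 2) ^ #s) ^ n ≤ ‖k w‖ * (∏ a ∈ s, ‖w - a‖) ^ n := by
            gcongr
            rw [← prod_const]
            refine prod_le_prod (fun a _ => by positivity) fun a ha => ?_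
            linarith [norm_sub_norm_le w a, hs a ha]
        _ = ‖g w‖ := by rw [hgk w, norm_mul, norm_pow, norm_prod, mul_comm]
        _ ≤ M := hM w hw.le
    · rwa [closure_ball _ hR.ne', mem_closedBall_zero_iff]
  have hprod_nonneg : 0 ≤ ∏ a ∈ s, ‖z - a‖ := prod_nonneg fun _ _ => norm_nonneg _
  have hprod_le : ∏ a ∈ s, ‖z - a‖ ≤ ρ ^ #s := by
    rw [← prod_const]
    exact prod_le_prod (fun _ _ => norm_nonneg _) hρ
  calc ‖g z‖ = (∏ a ∈ s, ‖z - a‖) ^ n * ‖k z‖ := by rw [hgk z, norm_mul, norm_pow, norm_prod]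
    _ ≤ (ρ ^ #s) ^ n * (M / (R / 2) ^ (n * #s)) :=
        mul_le_mul (pow_le_pow_left₀ hprod_nonneg hprod_le n) hk_le (norm_nonneg _)
          (pow_nonneg (hprod_nonneg.trans hprod_le) n)
    _ = M * (2 * ρ / R) ^ (n * #s) := by
        rw [← pow_mul, mul_comm #s, mul_div_left_comm, ← div_pow, div_div_eq_mul_div, mul_comm ρ]

/-- The integer points `0, 1, …, S - 1` of the complex plane. -/
noncomputable def natPoints (S : ℕ) : Finset ℂ :=
  (range S).map ⟨Nat.cast, Nat.cast_injective⟩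

theorem mem_natPoints {S : ℕ} {a : ℂ} : a ∈ natPoints S ↔ ∃ t < S, (t : ℂ) = a := by
  simp [natPoints]

theorem card_natPoints (S : ℕ) : #(natPoints S) = S := by
  simp [natPoints]

theorem norm_sub_natCast_le {z : ℂ} {s t S : ℕ} (hz : ‖z - s‖ = 1) (hs : s < S) (ht : t < S) :
    ‖z - t‖ ≤ S := by
  have hst : ‖(s : ℂ) - t‖ ≤ S - 1 := by
    have hs' : (s : ℝ) + 1 ≤ S := by exact_mod_cast hs
    have ht' : (t : ℝ) + 1 ≤ S := by exact_mod_cast ht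
    rw [← Complex.ofReal_natCast s, ← Complex.ofReal_natCast t, ← Complex.ofReal_sub,
      Complex.norm_real, Real.norm_eq_abs, abs_le]
    constructor <;> linarith [s.cast_nonneg (α := ℝ), t.cast_nonneg (α := ℝ)]
  linarith [norm_sub_le_norm_sub_add_norm_sub z s t]

theorem norm_iteratedDeriv_le_of_zeros {n S : ℕ} {g : ℂ → ℂ} (hg : Differentiable ℂ g)
    (hzero : ∀ t < S, ∀ j < n, iteratedDeriv j g (t : ℂ) = 0) {s : ℕ} (hs : s < S) {R M : ℝ}
    (hR : 2 * (S : ℝ) ≤ R) (hM : ∀ z : ℂ, ‖z‖ ≤ R → ‖g z‖ ≤ M) :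
    ‖iteratedDeriv n g (s : ℂ)‖ ≤ n.factorial * (M * (2 * S / R) ^ (n * S)) := by
  have hs1 : (s : ℝ) + 1 ≤ S := by exact_mod_cast hs
  have : (0 : ℝ) ≤ s := s.cast_nonneg
  have hord : ∀ a ∈ natPoints S, (n : ℕ∞) ≤ analyticOrderAt g a := fun a ha => by
    obtain ⟨t, ht, rfl⟩ := mem_natPoints.1 ha
    exact (natCast_le_analyticOrderAt_iff_iteratedDeriv_eq_zero (hg.analyticAt _)).2 (hzero t ht)
  have hpts : ∀ a ∈ natPoints S, ‖a‖ ≤ R / 2 := fun a ha => by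
    obtain ⟨t, ht, rfl⟩ := mem_natPoints.1 ha
    have ht' : (t : ℝ) < S := by exact_mod_cast ht
    rw [Complex.norm_natCast]
    linarith
  have hcircle : ∀ z ∈ Metric.sphere (s : ℂ) 1, ‖g z‖ ≤ M * (2 * S / R) ^ (n * S) := by
    intro z hz
    rw [mem_sphere_iff_norm] at hz
    have hzR : ‖z‖ ≤ R := by
      have := norm_sub_norm_le z (s : ℂ)
      rw [Complex.norm_natCast] at this
      linarith
    have hzS : ∀ a ∈ natPoints S, ‖z - a‖ ≤ S := fun a ha => by
      obtain ⟨t, ht, rfl⟩ := mem_natPoints.1 ha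
      exact norm_sub_natCast_le hz hs ht
    simpa only [card_natPoints] using
      norm_le_mul_pow_of_le_analyticOrderAt hg hord (by linarith) hpts hM hzR hzS
  simpa [mul_assoc] using
    Complex.norm_iteratedDeriv_le_of_forall_mem_sphere_norm_le n one_pos hg.diffContOnCl hcircle

/-! ### Exponential sums and their derivatives -/

section Moment

variable {A B I J : Type*} [Fintype B]

/-- The moment `∑_b w_b x_{b,k₁} ⋯ x_{b,kₙ}` along the word `l = [k₁, …, kₙ]` of the points
`x_b` with weights `w_b`. -/
def moment [CommSemiring A] (w : B → A) (x : B → I → A) (l : List I) : A :=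
  ∑ b, w b * (l.map (x b)).prod

theorem moment_cons [CommSemiring A] (w : B → A) (x : B → I → A) (k : I) (l : List I) :
    moment w x (k :: l) = moment (fun b => w b * x b k) x l := by
  simp only [moment, List.map_cons, List.prod_cons, mul_assoc]

theorem moment_const_mul [CommSemiring A] (c : A) (w : B → A) (x : B → I → A) (l : List I) :
    moment (fun b => c * w b) x l = c * moment w x l := by
  simp only [moment, mul_sum, mul_assoc]

theorem moment_perm [CommSemiring A] (w : B → A) (x : B → I → A) {l l' : List I}
    (h : l.Perm l') : moment w x l = moment w x l' := by
  simp only [moment, (h.map _).prod_eq]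

theorem map_moment {A' : Type*} [CommSemiring A] [CommSemiring A'] (φ : A →+* A') (w : B → A)
    (x : B → I → A) (l : List I) :
    φ (moment w x l) = moment (fun b => φ (w b)) (fun b k => φ (x b k)) l := by
  simp only [moment, map_sum, map_mul, map_list_prod, List.map_map, Function.comp_def]

theorem moment_cons_eq_sum_of_linear [CommSemiring A] [Fintype I] (w : B → A) {x : B → I → A}
    {y : B → J → A} {d : J → I → A} (hd : ∀ b j, y b j = ∑ k, d j k * x b k) (j : J)
    (l : List J) :
    moment w y (j :: l) = ∑ k, d j k * moment (fun b => w b * x b k) y l := by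
  simp only [moment, List.map_cons, List.prod_cons, hd _ j, mul_sum, sum_mul]
  rw [sum_comm]
  exact sum_congr rfl fun k _ => sum_congr rfl fun b _ => by ring

theorem norm_list_prod_map_le (x : I → ℂ) {Λ : ℝ} (hx : ∀ k, ‖x k‖ ≤ Λ) (l : List I) :
    ‖(l.map x).prod‖ ≤ Λ ^ l.length := by
  induction l with
  | nil => simp
  | cons k l ih =>
    rw [List.map_cons, List.prod_cons, norm_mul, List.length_cons, pow_succ']
    exact mul_le_mul (hx k) ih (norm_nonneg _) ((norm_nonneg _).trans (hx k))

theorem norm_moment_le {w : B → ℂ} {x : B → I → ℂ} {P Λ : ℝ} (hw : ∀ b, ‖w b‖ ≤ P)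
    (hx : ∀ b k, ‖x b k‖ ≤ Λ) (l : List I) :
    ‖moment w x l‖ ≤ Fintype.card B * (P * Λ ^ l.length) := by
  have hterm : ∀ b ∈ univ, ‖w b * (l.map (x b)).prod‖ ≤ P * Λ ^ l.length := fun b _ => by
    rw [norm_mul]
    exact mul_le_mul (hw b) (norm_list_prod_map_le _ (hx b) l) (norm_nonneg _)
      ((norm_nonneg _).trans (hw b))
  simpa [moment] using norm_sum_le_of_le univ hterm

theorem norm_moment_le_of_linear [Fintype I] {x : B → I → ℂ} {y : B → J → ℂ} {d : J → I → ℂ}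
    (hd : ∀ b j, y b j = ∑ k, d j k * x b k) {C : ℝ} (hC : ∀ j, ∑ k, ‖d j k‖ ≤ C) (hC0 : 0 ≤ C)
    {M : ℝ} (hM : 0 ≤ M) {n : ℕ} {w : B → ℂ}
    (hw : ∀ l : List I, l.length = n → ‖moment w x l‖ ≤ M) {v : List J} (hv : v.length = n) :
    ‖moment w y v‖ ≤ C ^ n * M := by
  induction v generalizing n w with
  | nil => subst hv; simpa [moment] using hw [] rfl
  | cons j v ih =>
    subst hv
    have hstep : ∀ k, ‖moment (fun b => w b * x b k) y v‖ ≤ C ^ v.length * M := fun k =>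
      ih (fun l hl => by rw [← moment_cons]; exact hw _ (by simp [hl])) rfl
    rw [moment_cons_eq_sum_of_linear w hd]
    calc ‖∑ k, d j k * moment (fun b => w b * x b k) y v‖
        ≤ ∑ k, ‖d j k‖ * (C ^ v.length * M) := norm_sum_le_of_le _ fun k _ => by
          rw [norm_mul]; gcongr; exact hstep k
      _ = (∑ k, ‖d j k‖) * (C ^ v.length * M) := by rw [sum_mul]
      _ ≤ C * (C ^ v.length * M) := by gcongr; exact hC j
      _ = C ^ (j :: v).length * M := by rw [List.length_cons]; ring

theorem moment_eq_zero_of_linear [Fintype I] {x : B → I → ℂ} {y : B → J → ℂ} {d : J → I → ℂ}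
    (hd : ∀ b j, y b j = ∑ k, d j k * x b k) {n : ℕ} {w : B → ℂ}
    (hw : ∀ l : List I, l.length = n → moment w x l = 0) {v : List J} (hv : v.length = n) :
    moment w y v = 0 := by
  induction v generalizing n w with
  | nil => subst hv; simpa [moment] using hw [] rfl
  | cons j v ih =>
    subst hv
    rw [moment_cons_eq_sum_of_linear w hd]
    refine sum_eq_zero fun k _ => ?_
    rw [ih (fun l hl => by rw [← moment_cons]; exact hw _ (by simp [hl])) rfl, mul_zero]

end Moment

section ExpSum

variable {B I : Type*} [Fintype B] [Fintype I]

/-- The derivative of `z ↦ ∑_b p_b exp⟨X_b, z⟩` with respect to the coordinates in the word `l`,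
at the point `z`. -/
noncomputable def derivExpSum (X : B → I → ℂ) (p : B → ℂ) (l : List I) (z : I → ℂ) : ℂ :=
  moment (fun b => p b * Complex.exp (∑ k, X b k * z k)) X l

variable (X : B → I → ℂ) (p : B → ℂ)

theorem hasDerivAt_derivExpSum_update [DecidableEq I] (l : List I) (z : I → ℂ) (k : I) (t : ℂ) :
    HasDerivAt (fun t => derivExpSum X p l (Function.update z k t))
      (derivExpSum X p (k :: l) (Function.update z k t)) t := by
  refine HasDerivAt.fun_sum fun b _ => ?_
  have hlin : HasDerivAt (fun t => ∑ i, X b i * Function.update z k t i) (X b k) t := by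
    have h : ∀ i, HasDerivAt (fun t => X b i * Function.update z k t i)
        (X b i * (Pi.single k 1 : I → ℂ) i) t :=
      fun i => ((hasDerivAt_pi.1 (hasDerivAt_update z k t)) i).const_mul _
    exact (HasDerivAt.fun_sum fun i _ => h i).congr_deriv (by simp [Pi.single_apply])
  exact ((hlin.cexp.const_mul (p b)).mul_const _).congr_deriv
    (by simp only [List.map_cons, List.prod_cons]; ring)

theorem iteratedDeriv_derivExpSum_update [DecidableEq I] (l : List I) (z : I → ℂ) (k : I)
    (j : ℕ) :
    iteratedDeriv j (fun t => derivExpSum X p l (Function.update z k t)) =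
      fun t => derivExpSum X p (List.replicate j k ++ l) (Function.update z k t) := by
  induction j with
  | zero => simp
  | succ j ih =>
    rw [iteratedDeriv_succ, ih]
    exact funext fun t => (hasDerivAt_derivExpSum_update X p _ z k t).deriv

variable {X p}

theorem norm_derivExpSum_le {P Λ : ℝ} (hX : ∀ b k, ‖X b k‖ ≤ Λ) (hp : ∀ b, ‖p b‖ ≤ P)
    (l : List I) (z : I → ℂ) :
    ‖derivExpSum X p l z‖ ≤
      Fintype.card B * (P * Real.exp (Λ * ∑ k, ‖z k‖) * Λ ^ l.length) := by
  refine norm_moment_le (fun b => ?_) hX l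
  have hexp : ‖∑ k, X b k * z k‖ ≤ Λ * ∑ k, ‖z k‖ := by
    rw [mul_sum]
    exact norm_sum_le_of_le _ fun k _ => by rw [norm_mul]; gcongr; exact hX b k
  rw [norm_mul]
  exact mul_le_mul (hp b) ((Complex.norm_exp_le_exp_norm _).trans (Real.exp_le_exp.2 hexp))
    (norm_nonneg _) ((norm_nonneg _).trans (hp b))

theorem sum_norm_update_le [DecidableEq I] {z : I → ℂ} {S R : ℝ} (hz : ∀ k, ‖z k‖ ≤ S) (k₀ : I)
    {t : ℂ} (ht : ‖t‖ ≤ R) :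
    ∑ k, ‖Function.update z k₀ t k‖ ≤ Fintype.card I * S + R := by
  have hS : 0 ≤ S := (norm_nonneg _).trans (hz k₀)
  calc ∑ k, ‖Function.update z k₀ t k‖ ≤ ∑ k, (S + if k = k₀ then R else 0) := by
        refine sum_le_sum fun k _ => ?_
        rcases eq_or_ne k k₀ with rfl | hk
        · simpa using ht.trans (le_add_of_nonneg_left hS)
        · simpa [hk] using hz k
    _ = Fintype.card I * S + R := by simp [sum_add_distrib]

theorem exists_length_le_card_mul_count [DecidableEq I] {l : List I} (hl : l ≠ []) :
    ∃ k, l.length ≤ Fintype.card I * l.count k := by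
  by_contra! hcon
  obtain ⟨a, -⟩ := List.exists_mem_of_ne_nil l hl
  have hsum : ∑ k, l.count k = l.length := by
    simpa using Multiset.sum_count_eq_card (s := univ) (m := (l : Multiset I)) (by simp)
  have hlt : ∑ k : I, Fintype.card I * l.count k < ∑ _k : I, l.length :=
    sum_lt_sum_of_nonempty ⟨a, mem_univ _⟩ fun k _ => hcon k
  simp [← mul_sum, hsum] at hlt

theorem norm_derivExpSum_replicate_append_le_of_zeros {n S : ℕ} {k : I}
    {rest : List I} {Λ P R : ℝ} (hX : ∀ b k, ‖X b k‖ ≤ Λ) (hp : ∀ b, ‖p b‖ ≤ P)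
    (hR : 2 * (S : ℝ) ≤ R)
    (hzero : ∀ j < n, ∀ s : I → ℕ, (∀ i, s i < S) →
      derivExpSum X p (List.replicate j k ++ rest) (fun i => s i) = 0)
    {s : I → ℕ} (hs : ∀ i, s i < S) (hΛ : 0 ≤ Λ) (hP : 0 ≤ P) :
    ‖derivExpSum X p (List.replicate n k ++ rest) (fun i => s i)‖ ≤
      n.factorial * (Fintype.card B *
        (P * Real.exp (Λ * (Fintype.card I * S + R)) * Λ ^ rest.length) *
          (2 * S / R) ^ (n * S)) := by
  classical
  set g : ℂ → ℂ := fun t => derivExpSum X p rest (Function.update (fun i => (s i : ℂ)) k t)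
  have hupdate : ∀ t : ℕ, Function.update (fun i => (s i : ℂ)) k t =
      fun i => ((Function.update s k t i : ℕ) : ℂ) := fun t => by
    funext i
    rcases eq_or_ne i k with rfl | hi <;> simp [*]
  have hg_zero : ∀ t < S, ∀ j < n, iteratedDeriv j g (t : ℂ) = 0 := by
    intro t ht j hj
    simp only [g, iteratedDeriv_derivExpSum_update, hupdate]
    refine hzero j hj _ fun i => ?_
    rcases eq_or_ne i k with rfl | hi <;> simp [*]
  have hg_le : ∀ t : ℂ, ‖t‖ ≤ R → ‖g t‖ ≤
      Fintype.card B * (P * Real.exp (Λ * (Fintype.card I * S + R)) * Λ ^ rest.length) := by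
    intro t ht
    refine (norm_derivExpSum_le hX hp _ _).trans ?_
    gcongr
    exact sum_norm_update_le (fun i => by simpa using (hs i).le) k ht
  have hvalue : derivExpSum X p (List.replicate n k ++ rest) (fun i => s i) =
      iteratedDeriv n g (s k) := by
    simp only [g, iteratedDeriv_derivExpSum_update, hupdate, Function.update_eq_self]
  rw [hvalue]
  refine norm_iteratedDeriv_le_of_zeros (fun t => ?_) hg_zero (hs k) hR hg_le
  exact (hasDerivAt_derivExpSum_update X p _ _ k t).differentiableAt

-- The Schwarz lemma is applied in the single variable that occurs most often in `l`.
theorem norm_derivExpSum_le_of_zeros {T S e : ℕ} (hT : 0 < T) {Λ P R : ℝ} (hΛ : 1 ≤ Λ)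
    (hX : ∀ b k, ‖X b k‖ ≤ Λ) (hP : 0 ≤ P) (hp : ∀ b, ‖p b‖ ≤ P) (hR : 2 * (S : ℝ) ≤ R)
    (he : Fintype.card I * e ≤ T * S)
    (hzero : ∀ l : List I, l.length < T → ∀ s : I → ℕ, (∀ k, s k < S) →
      derivExpSum X p l (fun k => s k) = 0)
    {l : List I} (hl : l.length = T) {s : I → ℕ} (hs : ∀ k, s k < S) :
    ‖derivExpSum X p l (fun k => s k)‖ ≤
      T ^ T * (Fintype.card B * (P * Real.exp (Λ * (Fintype.card I * S + R)) * Λ ^ T) *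
        (2 * S / R) ^ e) := by
  classical
  obtain ⟨k, hk⟩ := exists_length_le_card_mul_count (List.ne_nil_of_length_pos (hl ▸ hT))
  set n := l.count k with hn
  set rest := l.filter (fun x => !(x == k))
  have hperm : l.Perm (List.replicate n k ++ rest) := by
    rw [hn, ← List.filter_beq]
    exact (List.filter_append_perm _ l).symm
  have hlen : T = n + rest.length := by simpa [hl] using hperm.length_eq
  have hS : (0 : ℝ) < S := by exact_mod_cast (Nat.zero_le _).trans_lt (hs k)
  have hR0 : 0 < R := by linarith
  have hfact : (n.factorial : ℝ) ≤ T ^ T := by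
    exact_mod_cast (Nat.factorial_le (by omega)).trans (Nat.factorial_le_pow T)
  have hexponent : e ≤ n * S := by
    refine Nat.le_of_mul_le_mul_left (he.trans ?_) (Fintype.card_pos_iff.2 ⟨k⟩)
    rw [← hl, ← mul_assoc]
    exact Nat.mul_le_mul_right _ hk
  rw [show derivExpSum X p l _ = _ from moment_perm _ _ hperm]
  refine (norm_derivExpSum_replicate_append_le_of_zeros hX hp hR (fun j hj t ht => ?_) hs
    (zero_le_one.trans hΛ) hP).trans ?_
  · exact hzero _ (by rw [List.length_append, List.length_replicate]; omega) t ht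
  · gcongr ?_ * (_ * (_ * ?_) * ?_)
    · exact pow_le_pow_right₀ hΛ (by omega)
    · exact pow_le_pow_of_le_one (by positivity) ((div_le_one hR0).2 hR) hexponent

end ExpSum

/-! ### Choice of parameters -/

/-- Siegel's bound for the coefficients of the auxiliary exponential sum: there are `L ^ D`
unknowns and the equations are indexed by the derivatives of order `< N ^ D` in each variable and
the integer points of `[0, S) ^ D`. -/
def coeffBound (C : ℝ) (D L N S : ℕ) : ℝ :=
  C * (C * L ^ D * ((C * L) ^ (D * N ^ D) * C ^ (L * S)))

/-- Bound for the house of a derivative of order `T` of the auxiliary exponential sum at an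
integer point, with denominators cleared. -/
def houseBound (C : ℝ) (D L N S T : ℕ) : ℝ :=
  L ^ D * (coeffBound C D L N S * C ^ (L * S) * (C * L) ^ T)

/-- Bound coming from the Schwarz lemma for the absolute value of the first nonzero derivative
of the auxiliary exponential sum, with denominators cleared. -/
noncomputable def schwarzBound (C : ℝ) (D L N S T : ℕ) (R : ℝ) (e : ℕ) : ℝ :=
  C ^ (L * S) * (C ^ T * (T ^ T *
    (L ^ D * (coeffBound C D L N S * Real.exp (C * L * (D * S + R)) * (C * L) ^ T) *
      (2 * S / R) ^ e)))

section Parameters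

variable {C : ℝ} {D L N S T : ℕ} {R : ℝ}

theorem coeffBound_nonneg (hC : 0 ≤ C) : 0 ≤ coeffBound C D L N S := by
  unfold coeffBound
  positivity

/-- `Z` dominates each of the factors from which `coeffBound`, `houseBound` and `schwarzBound`
are built, except the decaying factor `(2 * S / R) ^ e`. -/
structure DominatesFactors (C : ℝ) (D L N S T : ℕ) (R Z : ℝ) : Prop where
  one_le : 1 ≤ C
  const_le : C ≤ Z
  length_le : L ≤ Z
  const_pow_le : C ^ T ≤ Z
  order_pow_le : (T : ℝ) ^ T ≤ Z
  mul_pow_le : (C * L) ^ T ≤ Z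
  mul_pow_siegel_le : (C * L) ^ (D * N ^ D) ≤ Z ^ D
  denom_le : C ^ (L * S) ≤ Z
  exp_le : Real.exp (C * L * (D * S + R)) ≤ Z

namespace DominatesFactors

variable {Z : ℝ}

theorem coeffBound_le (h : DominatesFactors C D L N S T R Z) :
    coeffBound C D L N S ≤ Z ^ (2 * D + 3) := by
  have hC : 0 ≤ C := zero_le_one.trans h.one_le
  have hZ : 0 ≤ Z := hC.trans h.const_le
  calc coeffBound C D L N S ≤ Z * (Z * Z ^ D * (Z ^ D * Z)) := by
        unfold coeffBound
        gcongr
        exacts [h.const_le, h.const_le, h.length_le, h.mul_pow_siegel_le, h.denom_le]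
    _ = Z ^ (2 * D + 3) := by ring

theorem houseBound_le (h : DominatesFactors C D L N S T R Z) :
    houseBound C D L N S T ≤ Z ^ (3 * D + 5) := by
  have hC : 0 ≤ C := zero_le_one.trans h.one_le
  have hZ : 0 ≤ Z := hC.trans h.const_le
  have hP : 0 ≤ coeffBound C D L N S := coeffBound_nonneg hC
  calc houseBound C D L N S T ≤ Z ^ D * (Z ^ (2 * D + 3) * Z * Z) := by
        unfold houseBound
        gcongr
        exacts [h.length_le, h.coeffBound_le, h.denom_le, h.mul_pow_le]
    _ = Z ^ (3 * D + 5) := by ring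

theorem schwarzBound_le (h : DominatesFactors C D L N S T R Z) (hR : 0 ≤ R) (e : ℕ) :
    schwarzBound C D L N S T R e ≤ Z ^ (3 * D + 8) * (2 * S / R) ^ e := by
  have hC : 0 ≤ C := zero_le_one.trans h.one_le
  have hZ : 0 ≤ Z := hC.trans h.const_le
  have hP : 0 ≤ coeffBound C D L N S := coeffBound_nonneg hC
  calc schwarzBound C D L N S T R e
      ≤ Z * (Z * (Z * (Z ^ D * (Z ^ (2 * D + 3) * Z * Z) * (2 * S / R) ^ e))) := by
        unfold schwarzBound
        gcongr
        exacts [h.denom_le, h.const_pow_le, h.order_pow_le, h.length_le, h.coeffBound_le, h.exp_le,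
          h.mul_pow_le]
    _ = Z ^ (3 * D + 8) * (2 * S / R) ^ e := by ring

theorem schwarzBound_mul_houseBound_pow_le (h : DominatesFactors C D L N S T R Z) (hR : 0 ≤ R)
    (e : ℕ) :
    schwarzBound C D L N S T R e * houseBound C D L N S T ^ (D - 1) ≤
      Z ^ (3 * D + 8 + (3 * D + 5) * (D - 1)) * (2 * S / R) ^ e := by
  have hC : 0 ≤ C := zero_le_one.trans h.one_le
  have hZ : 0 ≤ Z := hC.trans h.const_le
  have hH : 0 ≤ houseBound C D L N S T := by
    have := coeffBound_nonneg (D := D) (L := L) (N := N) (S := S) hC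
    unfold houseBound
    positivity
  calc schwarzBound C D L N S T R e * houseBound C D L N S T ^ (D - 1)
      ≤ Z ^ (3 * D + 8) * (2 * S / R) ^ e * (Z ^ (3 * D + 5)) ^ (D - 1) := by
        gcongr
        exacts [h.schwarzBound_le hR e, h.houseBound_le]
    _ = _ := by ring

end DominatesFactors

theorem dominatesFactors_mul_pow {K : ℝ} (hC : 1 ≤ C) (hK : 2 * S * C ≤ K)
    (hK_pow : C ^ (2 * S * S) ≤ K) (hK_exp : Real.exp (C * (2 * S * (D * S) + 2 * S)) ≤ K)
    (hS : 1 ≤ S) (hN : 1 ≤ N) (hNT : N ^ D ≤ T) (hL_pos : 1 ≤ L) (hL : L ≤ 2 * S * T)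
    (hLR : L * R ≤ 2 * S * T) :
    DominatesFactors C D L N S T R ((K * T) ^ T) := by
  have hT : 1 ≤ T := (Nat.one_le_pow D N hN).trans hNT
  have hTr : (1 : ℝ) ≤ T := by exact_mod_cast hT
  have hSr : (1 : ℝ) ≤ S := by exact_mod_cast hS
  have hLr : (L : ℝ) ≤ 2 * S * T := by exact_mod_cast hL
  have hL1 : (1 : ℝ) ≤ L := by exact_mod_cast hL_pos
  have hCK : C ≤ K := le_trans (by nlinarith) hK
  have hKT : K ≤ K * T := le_mul_of_one_le_right (by linarith) hTr
  have hKT1 : 1 ≤ K * T := by linarith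
  have hK_le : K * T ≤ (K * T) ^ T := le_self_pow₀ hKT1 (by omega)
  have hCL : C * L ≤ K * T := calc
    C * L ≤ C * (2 * S * T) := by gcongr
    _ = 2 * S * C * T := by ring
    _ ≤ K * T := by gcongr
  have hL_le : (L : ℝ) ≤ C * L := le_mul_of_one_le_left (by linarith) hC
  refine ⟨hC, by linarith, by linarith, ?_, ?_, ?_, ?_, ?_, ?_⟩
  · gcongr; exact hCK.trans hKT
  · gcongr; exact le_mul_of_one_le_left (by linarith) (hC.trans hCK)
  · gcongr
  · calc (C * L) ^ (D * N ^ D) ≤ (C * L) ^ (D * T) :=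
          pow_le_pow_right₀ (by nlinarith) (Nat.mul_le_mul_left D hNT)
      _ ≤ (K * T) ^ (D * T) := by gcongr
      _ = ((K * T) ^ T) ^ D := by rw [← pow_mul, mul_comm D]
  · calc C ^ (L * S) ≤ C ^ (2 * S * S * T) := pow_le_pow_right₀ hC (by nlinarith)
      _ = (C ^ (2 * S * S)) ^ T := pow_mul _ _ _
      _ ≤ (K * T) ^ T := by gcongr; linarith
  · calc Real.exp (C * L * (D * S + R)) ≤ Real.exp (T * (C * (2 * S * (D * S) + 2 * S))) := by
          rw [Real.exp_le_exp]
          nlinarith [mul_le_mul_of_nonneg_left hLR (zero_le_one.trans hC),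
            mul_le_mul_of_nonneg_left hLr (by positivity : 0 ≤ C * (D * S))]
      _ = Real.exp (C * (2 * S * (D * S) + 2 * S)) ^ T := Real.exp_nat_mul _ _
      _ ≤ (K * T) ^ T := by gcongr; linarith

theorem mul_pow_mul_div_pow_lt_one {K : ℝ} {κ : ℕ} (hK : 0 ≤ K) (hT : 0 < T)
    (hR : R ^ D = T) (hlt : K ^ κ * (2 * S) ^ (D * (κ + 1)) < T) :
    ((K * T) ^ T) ^ κ * (2 * S / R) ^ (D * (κ + 1) * T) < 1 := by
  have hT' : (0 : ℝ) < T := by exact_mod_cast hT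
  have hbase : (K * T) ^ κ * (2 * S / R) ^ (D * (κ + 1)) =
      K ^ κ * (2 * S) ^ (D * (κ + 1)) / T := by
    rw [div_pow, pow_mul R, hR, mul_pow]
    field_simp
    ring
  rw [pow_right_comm, pow_mul, ← mul_pow, hbase]
  exact pow_lt_one₀ (by positivity) ((div_lt_one hT').2 hlt) hT.ne'

theorem exists_parameters (hC : 1 ≤ C) (hD : 1 ≤ D) :
    ∃ S N : ℕ, 1 ≤ S ∧ 1 ≤ N ∧ ∀ T : ℕ, N ^ D ≤ T → ∃ (R : ℝ) (e : ℕ),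
      2 * (S : ℝ) ≤ R ∧ D * e ≤ T * S ∧
      schwarzBound C D (2 * S * N ^ (D - 1)) N S T R e *
        houseBound C D (2 * S * N ^ (D - 1)) N S T ^ (D - 1) < 1 := by
  set κ : ℕ := 3 * D + 8 + (3 * D + 5) * (D - 1)
  set S : ℕ := D * (D * (κ + 1)) with hS_def
  have hS : 1 ≤ S := Nat.mul_pos hD (Nat.mul_pos hD κ.succ_pos)
  set E : ℝ := Real.exp (C * (2 * S * (D * S) + 2 * S))
  set K : ℝ := 2 * S * C + C ^ (2 * S * S) + E
  have : 0 ≤ C := zero_le_one.trans hC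
  have hSC : 0 ≤ 2 * S * C := by positivity
  have hCS : 0 ≤ C ^ (2 * S * S) := by positivity
  have hE : 0 ≤ E := (Real.exp_pos _).le
  obtain ⟨N, hN⟩ := exists_nat_gt (max (2 * (S : ℝ)) (K ^ κ * (2 * S) ^ (D * (κ + 1))))
  have hN1 : 1 ≤ N := Nat.cast_pos.1 ((by positivity : (0 : ℝ) ≤ _).trans_lt hN)
  refine ⟨S, N, hS, hN1, fun T hNT => ?_⟩
  have hNT' : N ≤ T := (Nat.le_self_pow (by omega) N).trans hNT
  set R : ℝ := (T : ℝ) ^ ((D : ℝ)⁻¹)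
  have hRD : R ^ D = T := Real.rpow_inv_natCast_pow (Nat.cast_nonneg T) (by omega)
  have hNR : (N : ℝ) ≤ R := by
    refine le_of_pow_le_pow_left₀ (n := D) (by omega) (by positivity) ?_
    rw [hRD]
    exact_mod_cast hNT
  have hpow : (N : ℝ) ^ (D - 1) * R ≤ T := calc
    (N : ℝ) ^ (D - 1) * R ≤ R ^ (D - 1) * R := by gcongr
    _ = T := by rw [← pow_succ, Nat.sub_add_cancel hD, hRD]
  refine ⟨R, D * (κ + 1) * T, ((le_max_left _ _).trans hN.le).trans hNR,
    by rw [hS_def]; exact le_of_eq (by ring), ?_⟩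
  have hdom : DominatesFactors C D (2 * S * N ^ (D - 1)) N S T R ((K * T) ^ T) := by
    refine dominatesFactors_mul_pow hC (by linarith) (by linarith) (by linarith) hS hN1 hNT
      (Nat.mul_pos (by omega) (Nat.pow_pos hN1)) ?_ ?_
    · gcongr
      exact (Nat.pow_le_pow_right hN1 (Nat.sub_le D 1)).trans hNT
    · push_cast
      rw [mul_assoc]
      gcongr
  refine (hdom.schwarzBound_mul_houseBound_pow_le (by positivity) _).trans_lt
    (mul_pow_mul_div_pow_lt_one (by positivity) (by omega) hRD ?_)
  exact ((le_max_right _ _).trans_lt hN).trans_le (by exact_mod_cast hNT')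

end Parameters

/-! ### Heights of algebraic numbers -/

section Heights

open NumberField

universe u

theorem isIntegral_pow_mul_pow {A : Type*} [CommRing A] {δ y : A} (hδ : IsIntegral ℤ δ)
    (hy : IsIntegral ℤ (δ * y)) {n E : ℕ} (hn : n ≤ E) : IsIntegral ℤ (δ ^ E * y ^ n) := by
  rw [← Nat.sub_add_cancel hn, pow_add, mul_assoc, ← mul_pow]
  exact (hδ.pow _).mul (hy.pow _)

variable {K : Type u} [Field K] [NumberField K]

theorem house_le_iff {x : K} {c : ℝ} : house x ≤ c ↔ ∀ ψ : K →+* ℂ, ‖ψ x‖ ≤ c := by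
  refine ⟨fun h ψ => (norm_embedding_le_house x ψ).trans h, fun h => ?_⟩
  exact (pi_norm_le_iff_of_nonneg ((norm_nonneg _).trans (h (Classical.arbitrary _)))).2 h

theorem house_algEquiv_le (σ : K ≃ₐ[ℚ] K) (x : K) : house (σ x) ≤ house x :=
  house_le_iff.2 fun ψ => norm_embedding_le_house x (ψ.comp (σ : K →+* K))

theorem norm_embedding_algEquiv_le_house (φ : K →+* ℂ) (σ : K ≃ₐ[ℚ] K) (x : K) :
    ‖φ (σ x)‖ ≤ house x :=
  (norm_embedding_le_house _ _).trans (house_algEquiv_le σ x)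

theorem one_le_norm_mul_house_pow (φ : K →+* ℂ) {x : K} (hx : IsIntegral ℤ x) (h0 : x ≠ 0) :
    1 ≤ ‖φ x‖ * house x ^ (Module.finrank ℚ K - 1) := by
  refine le_trans ?_ (norm_norm_le_norm_mul_house_pow x φ)
  have hn : ((Algebra.norm ℤ (⟨x, hx⟩ : 𝓞 K) : ℤ) : ℚ) = Algebra.norm ℚ x :=
    Algebra.coe_norm_int (K := K) ⟨x, hx⟩
  rw [← hn, Int.norm_cast_rat, Int.norm_eq_abs]
  have hne : Algebra.norm ℤ (⟨x, hx⟩ : 𝓞 K) ≠ 0 := fun h =>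
    h0 (Algebra.norm_eq_zero_iff.1 (hn.symm.trans (by rw [h, Int.cast_zero])))
  exact_mod_cast Int.one_le_abs hne

theorem house_pow_mul_pow_le {δ y : K} {W : ℝ} (hδ : house δ ≤ W) (hy : house (δ * y) ≤ W)
    {n E : ℕ} (hn : n ≤ E) : house (δ ^ E * y ^ n) ≤ W ^ E := by
  have hδ0 := house_nonneg δ
  have hy0 := house_nonneg (δ * y)
  rw [← Nat.sub_add_cancel hn, pow_add, mul_assoc, ← mul_pow, pow_add]
  refine (house_mul_le _ _).trans (mul_le_mul ?_ ?_ (house_nonneg _) (by bound))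
  · exact (house_pow_le _ _).trans (by gcongr)
  · exact (house_pow_le _ _).trans (by gcongr)

theorem exists_isIntegral_mul_zpow (y : K) :
    ∃ δ : ℤ, δ ≠ 0 ∧ ∃ W : ℝ, ∀ (n : ℤ) (E : ℕ), |n| ≤ E →
      IsIntegral ℤ ((δ : K) ^ E * y ^ n) ∧ house ((δ : K) ^ E * y ^ n) ≤ W ^ E := by
  classical
  obtain ⟨δ, hδ, hint⟩ := exists_integral_multiples ℤ ℚ ({y, y⁻¹} : Finset K)
  simp only [zsmul_eq_mul, Finset.mem_insert, Finset.mem_singleton, forall_eq_or_imp,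
    forall_eq] at hint
  have hδint : IsIntegral ℤ (δ : K) := isIntegral_algebraMap (R := ℤ) (A := K)
  set W := max (house (δ : K)) (max (house (δ * y)) (house (δ * y⁻¹)))
  have hW : house (δ : K) ≤ W := le_max_left _ _
  have hWy : house (δ * y) ≤ W := (le_max_left _ _).trans (le_max_right _ _)
  have hWy' : house (δ * y⁻¹) ≤ W := (le_max_right _ _).trans (le_max_right _ _)
  refine ⟨δ, hδ, W, fun n E hn => ?_⟩
  obtain ⟨m, rfl | rfl⟩ := n.eq_nat_or_neg
  · rw [zpow_natCast]
    have hm : m ≤ E := by simpa using hn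
    exact ⟨isIntegral_pow_mul_pow hδint hint.1 hm, house_pow_mul_pow_le hW hWy hm⟩
  · rw [zpow_neg, zpow_natCast, ← inv_pow]
    have hm : m ≤ E := by simpa using hn
    exact ⟨isIntegral_pow_mul_pow hδint hint.2 hm, house_pow_mul_pow_le hW hWy' hm⟩

/-- `C` is a constant for Siegel's lemma over `𝓞 K`: systems with at least twice as many unknowns
as equations and coefficients of house at most `A` have a nontrivial solution whose house is linear
in `A`. -/
def IsSiegelBound (K : Type u) [Field K] [NumberField K] (C : ℝ) : Prop :=
  ∀ (α β : Type u) [Fintype α] [Fintype β] (a : Matrix α β (𝓞 K)) (A : ℝ), 1 ≤ A →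
    0 < Fintype.card α → 2 * Fintype.card α ≤ Fintype.card β →
    (∀ k l, house (a k l : K) ≤ A) →
    ∃ ξ : β → 𝓞 K, ξ ≠ 0 ∧ a.mulVec ξ = 0 ∧ ∀ l, house (ξ l : K) ≤ C * (C * Fintype.card β * A)

open Classical in
variable (K) in
/-- The constant of `NumberField.house.exists_ne_zero_int_vec_house_le` is private, hence the
existential. -/
theorem exists_siegel_constant : ∃ c : ℝ, ∀ (α β : Type u) [Fintype α] [Fintype β]
    (a : Matrix α β (𝓞 K)) (A : ℝ), a ≠ 0 → 0 < Fintype.card α →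
    Fintype.card α < Fintype.card β → (∀ k l, house (a k l : K) ≤ A) →
    ∃ ξ : β → 𝓞 K, ξ ≠ 0 ∧ a.mulVec ξ = 0 ∧ ∀ l, house (ξ l : K) ≤
      c * (c * Fintype.card β * A) ^
        ((Fintype.card α : ℝ) / (Fintype.card β - Fintype.card α)) :=
  ⟨_, fun _ _ _ _ a _ ha hα hαβ hA =>
    NumberField.house.exists_ne_zero_int_vec_house_le K a ha hα hαβ rfl hA rfl⟩

theorem mul_rpow_le_mul_self {c C b r : ℝ} (hc : |c| ≤ C) (hC : 1 ≤ C) (hb : 1 ≤ b) (hr : 0 ≤ r)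
    (hr1 : r ≤ 1) : c * (c * b) ^ r ≤ C * (C * b) := by
  have hCb : 1 ≤ C * b := one_le_mul_of_one_le_of_one_le hC hb
  calc c * (c * b) ^ r ≤ |c| * |(c * b) ^ r| := by rw [← abs_mul]; exact le_abs_self _
    _ ≤ C * (C * b) ^ r := by
      gcongr
      refine (Real.abs_rpow_le_abs_rpow _ _).trans (Real.rpow_le_rpow (abs_nonneg _) ?_ hr)
      rw [abs_mul, abs_of_nonneg (zero_le_one.trans hb)]
      gcongr
    _ ≤ C * (C * b) := by
      gcongr
      exact Real.rpow_le_self_of_one_le hCb hr1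

variable (K) in
theorem eventually_isSiegelBound : ∀ᶠ C : ℝ in atTop, IsSiegelBound K C := by
  obtain ⟨c, hc⟩ := exists_siegel_constant K
  filter_upwards [eventually_ge_atTop |c|, eventually_ge_atTop 1] with C hcC hC
  intro α β _ _ a A hA hα hαβ haA
  have hβ : 1 ≤ (Fintype.card β : ℝ) := by exact_mod_cast (by lia : 1 ≤ Fintype.card β)
  have hβA : 1 ≤ Fintype.card β * A := one_le_mul_of_one_le_of_one_le hβ hA
  simp only [mul_assoc] at hc ⊢
  by_cases ha : a = 0
  · have : Nonempty β := Fintype.card_pos_iff.1 (by lia)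
    refine ⟨1, one_ne_zero, by rw [ha, Matrix.zero_mulVec], fun l => ?_⟩
    have hone : house ((1 : β → 𝓞 K) l : K) = 1 := by simpa using house_intCast (K := K) 1
    rw [hone]
    exact one_le_mul_of_one_le_of_one_le hC (one_le_mul_of_one_le_of_one_le hC hβA)
  obtain ⟨ξ, hξ, hξ0, hξA⟩ := hc α β a A ha hα (by lia) haA
  have hα' : (0 : ℝ) < Fintype.card α := by exact_mod_cast hα
  have hαβ' : 2 * (Fintype.card α : ℝ) ≤ Fintype.card β := by exact_mod_cast hαβ
  refine ⟨ξ, hξ, hξ0, fun l => (hξA l).trans (mul_rpow_le_mul_self hcC hC hβA ?_ ?_)⟩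
  · exact div_nonneg hα'.le (by linarith)
  · rw [div_le_one (by linarith)]
    linarith

end Heights

section LinearIndependence

open NumberField

variable {K : Type*} [Field K]

theorem linearIndependent_embedding_comp_algEquiv {F : Type*} [Field F] [Algebra F K]
    (φ : K →+* ℂ) : LinearIndependent ℂ (fun (τ : K ≃ₐ[F] K) (x : K) => φ (τ x)) := by
  refine (linearIndependent_monoidHom K ℂ).comp
    (fun τ : K ≃ₐ[F] K => (φ : K →* ℂ).comp ((τ : K →+* K) : K →* K)) fun σ τ h => ?_
  ext x
  exact φ.injective (DFunLike.congr_fun h x)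

variable [NumberField K]

theorem sum_mul_embedding_eq_zero_of_integralBasis (φ : K →+* ℂ) {c : (K ≃ₐ[ℚ] K) → ℂ}
    (hc : ∀ k, ∑ τ, c τ * φ (τ (integralBasis K k)) = 0) (x : K) : ∑ τ, c τ * φ (τ x) = 0 := by
  have hterm (τ : K ≃ₐ[ℚ] K) : c τ * φ (τ x) =
      ∑ k, ((integralBasis K).repr x k : ℂ) * (c τ * φ (τ (integralBasis K k))) := by
    conv_lhs => rw [← (integralBasis K).sum_repr x]
    simp only [Algebra.smul_def, map_sum, map_mul, eq_ratCast, map_ratCast, Finset.mul_sum]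
    exact Finset.sum_congr rfl fun k _ => by ring
  simp only [hterm]
  rw [Finset.sum_comm]
  simp only [← Finset.mul_sum, hc, mul_zero, Finset.sum_const_zero]

open Classical in
theorem exists_dual_embedding (φ : K →+* ℂ) :
    ∃ d : (K ≃ₐ[ℚ] K) → Module.Free.ChooseBasisIndex ℤ (𝓞 K) → ℂ, ∀ σ τ : K ≃ₐ[ℚ] K,
      ∑ k, d σ k * φ (τ (integralBasis K k)) = if σ = τ then 1 else 0 := by
  let A : Matrix (Module.Free.ChooseBasisIndex ℤ (𝓞 K)) (K ≃ₐ[ℚ] K) ℂ :=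
    Matrix.of fun k τ => φ (τ (integralBasis K k))
  have hA : LinearIndependent ℂ A.col := by
    refine Fintype.linearIndependent_iff.2 fun c hc => ?_
    refine Fintype.linearIndependent_iff.1 (linearIndependent_embedding_comp_algEquiv φ) c ?_
    have hc' (k) : ∑ τ, c τ * φ (τ (integralBasis K k)) = 0 := by
      simpa [A, Matrix.col] using congrFun hc k
    funext x
    simpa using sum_mul_embedding_eq_zero_of_integralBasis φ hc' x
  obtain ⟨g, hg⟩ := (Matrix.toLin' A).exists_leftInverse_of_injective
    (LinearMap.ker_eq_bot.2 (Matrix.mulVec_injective_iff.2 hA))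
  have hgA : LinearMap.toMatrix' g * A = 1 := by
    rw [← LinearMap.toMatrix'_toLin' A, ← LinearMap.toMatrix'_comp, hg, LinearMap.toMatrix'_id]
  refine ⟨LinearMap.toMatrix' g, fun σ τ => ?_⟩
  simpa only [Matrix.mul_apply, Matrix.one_apply, A, Matrix.of_apply] using congrFun₂ hgA σ τ

theorem eq_zero_of_forall_sum_mul_pow_eq_zero {F B : Type*} [Field F] [Fintype B] {x c : B → F}
    (hx : Function.Injective x) (h : ∀ n : ℕ, ∑ b, c b * x b ^ n = 0) : c = 0 := by
  have hli := (linearIndependent_monoidHom (Multiplicative ℕ) F).comp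
    (fun b => powersHom F (x b)) ((powersHom F).injective.comp hx)
  funext b
  refine Fintype.linearIndependent_iff.1 hli c ?_ b
  funext n
  simpa [Finset.sum_apply] using h n.toAdd

end LinearIndependence

/-! ### The transcendence argument -/

section ListProd

variable {J M A : Type*}

theorem list_prod_map_eq_prod_pow_count [CommMonoid M] [Fintype J] [DecidableEq J] (v : List J)
    (g : J → M) : (v.map g).prod = ∏ j, g j ^ v.count j := by
  rw [Finset.prod_list_map_count]
  refine Finset.prod_subset (Finset.subset_univ _) fun j _ hj => ?_
  rw [List.count_eq_zero_of_not_mem (mt List.mem_toFinset.2 hj), pow_zero]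

theorem isIntegral_list_prod_map [CommRing A] (v : List J) {g : J → A}
    (hg : ∀ j, IsIntegral ℤ (g j)) : IsIntegral ℤ (v.map g).prod :=
  (integralClosure ℤ A).list_prod_mem fun x hx => by
    obtain ⟨j, -, rfl⟩ := List.mem_map.1 hx
    exact hg j

end ListProd

theorem two_mul_pow_mul_pow_le {D r S N : ℕ} (hr : r < D) (hN : 1 ≤ N) :
    2 * ((N ^ D) ^ r * S ^ D) ≤ (2 * S * N ^ (D - 1)) ^ D := by
  have hexp : D * r ≤ (D - 1) * D := by
    rw [mul_comm]
    exact Nat.mul_le_mul_right _ (by lia)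
  calc 2 * ((N ^ D) ^ r * S ^ D) = 2 ^ 1 * (N ^ (D * r) * S ^ D) := by rw [← pow_mul, pow_one]
    _ ≤ 2 ^ D * (N ^ ((D - 1) * D) * S ^ D) := by
      gcongr
      · norm_num
      · lia
    _ = (2 * S * N ^ (D - 1)) ^ D := by rw [pow_mul]; ring

section Transcendence

open NumberField

universe u

variable {K I J : Type u} [Field K] [NumberField K] [Fintype I] [Fintype J]

/-- The arithmetic input of the transcendence argument: a family of exponentials
`z ↦ exp (∑ k, X m k * z k)`, indexed by `m : I → ℕ`, whose values at the integer points
`s : I → ℕ` are algebraic and whose frequencies `X m` are, after an invertible linear change of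
variables, the algebraic integers `u m j`. The heights of all algebraic numbers involved
grow with the sizes of `m` and `s` at a rate controlled by `C`. In `value M` and `denom M` the
parameter `M` is the product of a strict bound for the entries of `m` and one for those of `s`:
`value M m s` is the exponential of frequency `X m` at `s` multiplied by the common denominator
`denom M`. -/
structure ExpSystem (φ : K →+* ℂ) (I J : Type u) [Fintype I] [Fintype J] (C : ℝ) where
  u : (I → ℕ) → J → K
  isIntegral_u : ∀ m j, IsIntegral ℤ (u m j)
  house_u_le : ∀ (L : ℕ) m, (∀ k, m k < L) → ∀ j, house (u m j) ≤ C * L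
  X : (I → ℕ) → I → ℂ
  norm_X_le : ∀ (L : ℕ) m, (∀ k, m k < L) → ∀ k, ‖X m k‖ ≤ C * L
  toU : J → I → ℂ
  u_eq : ∀ m j, φ (u m j) = ∑ k, toU j k * X m k
  sum_norm_toU_le : ∀ j, ∑ k, ‖toU j k‖ ≤ C
  toX : I → J → ℂ
  X_eq : ∀ m k, X m k = ∑ j, toX k j * φ (u m j)
  value : ℕ → (I → ℕ) → (I → ℕ) → K
  denom : ℕ → ℂ
  denom_ne_zero : ∀ M, denom M ≠ 0
  norm_denom_le : ∀ M, ‖denom M‖ ≤ C ^ M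
  isIntegral_value : ∀ (L S : ℕ) m s, (∀ k, m k < L) → (∀ k, s k < S) →
    IsIntegral ℤ (value (L * S) m s)
  house_value_le : ∀ (L S : ℕ) m s, (∀ k, m k < L) → (∀ k, s k < S) →
    house (value (L * S) m s) ≤ C ^ (L * S)
  map_value : ∀ M m s, φ (value M m s) = denom M * Complex.exp (∑ k, X m k * s k)

namespace ExpSystem

variable {φ : K →+* ℂ} {C : ℝ} (E : ExpSystem φ I J C) {L N S T : ℕ}

/-- The linear system expressing that `auxMoment` vanishes for words with fewer than `n`
occurrences of each letter. -/
def siegelMatrix (L S n : ℕ) : Matrix ((J → Fin n) × (I → Fin S)) (I → Fin L) (𝓞 K) :=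
  fun x m => ⟨(∏ j, E.u (fun k => m k) j ^ (x.1 j : ℕ)) *
      E.value (L * S) (fun k => m k) (fun k => x.2 k),
    (IsIntegral.prod _ fun j _ => (E.isIntegral_u _ j).pow _).mul
      (E.isIntegral_value L S _ _ (fun k => (m k).2) fun k => (x.2 k).2)⟩

theorem house_siegelMatrix_le {n : ℕ} (hCL : 1 ≤ C * L) (x m) :
    house (E.siegelMatrix L S n x m : K) ≤ (C * L) ^ (Fintype.card J * n) * C ^ (L * S) := by
  refine house_le_iff.2 fun ψ => ?_
  change ‖ψ ((∏ j, _) * _)‖ ≤ _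
  rw [map_mul, norm_mul, map_prod, norm_prod]
  have hvalue := E.house_value_le L S _ _ (fun k => (m k).2) fun k => (x.2 k).2
  refine mul_le_mul ?_ ((norm_embedding_le_house _ _).trans hvalue) (norm_nonneg _) (by positivity)
  calc ∏ j, ‖ψ (E.u (fun k => m k) j ^ (x.1 j : ℕ))‖ ≤ ∏ _j : J, (C * L) ^ n := by
        refine Finset.prod_le_prod (fun _ _ => norm_nonneg _) fun j _ => ?_
        rw [map_pow, norm_pow]
        have hu : ‖ψ (E.u (fun k => m k) j)‖ ≤ C * L :=
          (norm_embedding_le_house _ _).trans (E.house_u_le L _ (fun k => (m k).2) j)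
        exact (pow_le_pow_left₀ (norm_nonneg _) hu _).trans (pow_le_pow_right₀ hCL (x.1 j).2.le)
    _ = (C * L) ^ (Fintype.card J * n) := by
        rw [Finset.prod_const, ← pow_mul, Finset.card_univ, mul_comm n]

theorem value_ne_zero (M : ℕ) (m s : I → ℕ) : E.value M m s ≠ 0 := fun h => by
  have hmap := E.map_value M m s
  rw [h, map_zero] at hmap
  exact mul_ne_zero (E.denom_ne_zero M) (Complex.exp_ne_zero _) hmap.symm

section AuxMoment

variable [DecidableEq I]

/-- The derivative along the word `v`, taken in the variables dual to `u`, of the auxiliary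
exponential sum with coefficients `ξ` at the integer point `s`, with denominators cleared. -/
def auxMoment (ξ : (I → Fin L) → 𝓞 K) (S : ℕ) (v : List J) (s : I → ℕ) : K :=
  moment (fun m => (ξ m : K) * E.value (L * S) (fun k => m k) s) (fun m => E.u (fun k => m k)) v

theorem auxMoment_eq_zero_of_siegelMatrix {n : ℕ} {ξ : (I → Fin L) → 𝓞 K}
    (hξ : (E.siegelMatrix L S n).mulVec ξ = 0) {v : List J} (hv : v.length < n) {s : I → ℕ}
    (hs : ∀ k, s k < S) : E.auxMoment ξ S v s = 0 := by
  classical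
  have h := congrArg (algebraMap (𝓞 K) K) (congrFun hξ
    (fun j => ⟨v.count j, List.count_le_length.trans_lt hv⟩, fun k => ⟨s k, hs k⟩))
  simp only [Matrix.mulVec, dotProduct, map_sum, map_mul, Pi.zero_apply, map_zero] at h
  rw [auxMoment, moment, ← h]
  refine Finset.sum_congr rfl fun m _ => ?_
  rw [list_prod_map_eq_prod_pow_count, mul_right_comm, mul_assoc, mul_comm]
  rfl

theorem exists_auxMoment_eq_zero (hsiegel : IsSiegelBound K C) (hC : 1 ≤ C) (hS : 1 ≤ S)
    (hN : 1 ≤ N) (hJI : Fintype.card J < Fintype.card I)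
    (hL : L = 2 * S * N ^ (Fintype.card I - 1)) :
    ∃ ξ : (I → Fin L) → 𝓞 K, ξ ≠ 0 ∧
      (∀ m, house (ξ m : K) ≤ coeffBound C (Fintype.card I) L N S) ∧
      ∀ v s, v.length < N ^ Fintype.card I → (∀ k, s k < S) → E.auxMoment ξ S v s = 0 := by
  classical
  have hL1 : 1 ≤ L := by rw [hL]; exact Nat.mul_pos (by lia) (Nat.pow_pos hN)
  have hCL : 1 ≤ C * L := one_le_mul_of_one_le_of_one_le hC (by exact_mod_cast hL1)
  have : Nonempty (Fin (N ^ Fintype.card I)) := ⟨⟨0, Nat.pow_pos hN⟩⟩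
  have : Nonempty (Fin S) := ⟨⟨0, hS⟩⟩
  obtain ⟨ξ, hξ0, hξ, hξC⟩ := hsiegel _ _ (E.siegelMatrix L S (N ^ Fintype.card I))
    ((C * L) ^ (Fintype.card I * N ^ Fintype.card I) * C ^ (L * S))
    (one_le_mul_of_one_le_of_one_le (one_le_pow₀ hCL) (one_le_pow₀ hC)) Fintype.card_pos
    (by simpa [hL] using two_mul_pow_mul_pow_le hJI hN)
    fun x m => (E.house_siegelMatrix_le hCL x m).trans (by gcongr)
  refine ⟨ξ, hξ0, fun m => (hξC m).trans_eq ?_,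
    fun v s hv hs => E.auxMoment_eq_zero_of_siegelMatrix hξ hv hs⟩
  simp [coeffBound]

theorem exists_auxMoment_ne_zero {j : J} (hj : Function.Injective fun m => E.u m j) (S : ℕ)
    (s : I → ℕ) {ξ : (I → Fin L) → 𝓞 K} (hξ : ξ ≠ 0) : ∃ v, E.auxMoment ξ S v s ≠ 0 := by
  classical
  by_contra! hzero
  refine hξ (funext fun m => RingOfIntegers.ext ?_)
  have hinj : Function.Injective fun m : I → Fin L => E.u (fun k => m k) j :=
    hj.comp Fin.val_injective.comp_left
  have hcoeff := congrFun (eq_zero_of_forall_sum_mul_pow_eq_zero hinj fun n => by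
    simpa [auxMoment, moment] using hzero (List.replicate n j)) m
  exact (mul_eq_zero.1 hcoeff).resolve_right (E.value_ne_zero _ _ _)

theorem map_auxMoment (ξ : (I → Fin L) → 𝓞 K) (S : ℕ) (v : List J) (s : I → ℕ) :
    φ (E.auxMoment ξ S v s) = E.denom (L * S) *
      moment (fun m => φ (ξ m) * Complex.exp (∑ k, E.X (fun k => m k) k * s k))
        (fun (m : I → Fin L) j => φ (E.u (fun k => m k) j)) v := by
  rw [auxMoment, map_moment, ← moment_const_mul]
  simp only [map_mul, E.map_value, mul_left_comm]

theorem derivExpSum_eq_zero {ξ : (I → Fin L) → 𝓞 K} {s : I → ℕ} {l : List I}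
    (hzero : ∀ v : List J, v.length = l.length → E.auxMoment ξ S v s = 0) :
    derivExpSum (fun m : I → Fin L => E.X fun k => m k) (fun m => φ (ξ m)) l
      (fun k => s k) = 0 := by
  have hlin (m : I → Fin L) (k : I) : E.X (fun k => m k) k =
      ∑ j, E.toX k j * φ (E.u (fun k => m k) j) := E.X_eq _ k
  refine moment_eq_zero_of_linear hlin (fun v hv => ?_) rfl
  have hmap := E.map_auxMoment ξ S v s
  rw [hzero v hv, map_zero] at hmap
  exact (mul_eq_zero.1 hmap.symm).resolve_left (E.denom_ne_zero _)

theorem norm_map_auxMoment_le (hC : 1 ≤ C) (hL : 1 ≤ L) {R : ℝ} {e : ℕ}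
    {ξ : (I → Fin L) → 𝓞 K}
    (hξ : ∀ m, house (ξ m : K) ≤ coeffBound C (Fintype.card I) L N S) (hT : 0 < T)
    (hR : 2 * (S : ℝ) ≤ R) (he : Fintype.card I * e ≤ T * S)
    (hzero : ∀ v s, v.length < T → (∀ k, s k < S) → E.auxMoment ξ S v s = 0)
    {v : List J} (hv : v.length = T) {s : I → ℕ} (hs : ∀ k, s k < S) :
    ‖φ (E.auxMoment ξ S v s)‖ ≤ schwarzBound C (Fintype.card I) L N S T R e := by
  have hC0 : 0 ≤ C := zero_le_one.trans hC
  have hR0 : 0 ≤ R := le_trans (by positivity) hR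
  have hP := coeffBound_nonneg (D := Fintype.card I) (L := L) (N := N) (S := S) hC0
  have hCL : 1 ≤ C * L := one_le_mul_of_one_le_of_one_le hC (by exact_mod_cast hL)
  rw [map_auxMoment, norm_mul, schwarzBound]
  refine mul_le_mul (E.norm_denom_le _) ?_ (norm_nonneg _) (by positivity)
  have hlin (m : I → Fin L) (j : J) : φ (E.u (fun k => m k) j) =
      ∑ k, E.toU j k * E.X (fun k => m k) k := E.u_eq _ j
  refine norm_moment_le_of_linear hlin E.sum_norm_toU_le hC0 (by positivity) (fun l hl => ?_) hv
  have hschwarz := norm_derivExpSum_le_of_zeros hT hCL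
    (fun m k => E.norm_X_le L _ (fun k => (m k).2) k) hP
    (fun m => (norm_embedding_le_house _ φ).trans (hξ m)) hR he
    (fun l hl s hs => E.derivExpSum_eq_zero fun v hv => hzero v s (hv ▸ hl) hs) hl hs
  simpa [derivExpSum] using hschwarz

theorem isIntegral_auxMoment (ξ : (I → Fin L) → 𝓞 K) (v : List J) {s : I → ℕ}
    (hs : ∀ k, s k < S) : IsIntegral ℤ (E.auxMoment ξ S v s) :=
  IsIntegral.sum _ fun m _ => ((ξ m).2.mul (E.isIntegral_value L S _ s (fun k => (m k).2) hs)).mul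
    (isIntegral_list_prod_map v (E.isIntegral_u _))

theorem house_auxMoment_le {P : ℝ} {ξ : (I → Fin L) → 𝓞 K} (hξ : ∀ m, house (ξ m : K) ≤ P)
    (v : List J) {s : I → ℕ} (hs : ∀ k, s k < S) :
    house (E.auxMoment ξ S v s) ≤
      L ^ Fintype.card I * (P * C ^ (L * S) * (C * L) ^ v.length) := by
  classical
  refine house_le_iff.2 fun ψ => ?_
  have hweight (m : I → Fin L) :
      ‖ψ (ξ m * E.value (L * S) (fun k => m k) s)‖ ≤ P * C ^ (L * S) := by
    rw [map_mul, norm_mul]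
    have hξm := (norm_embedding_le_house _ ψ).trans (hξ m)
    exact mul_le_mul hξm ((norm_embedding_le_house _ ψ).trans
      (E.house_value_le L S _ s (fun k => (m k).2) hs)) (norm_nonneg _) ((norm_nonneg _).trans hξm)
  rw [auxMoment, map_moment]
  simpa using norm_moment_le hweight (fun m j => (norm_embedding_le_house _ ψ).trans
    (E.house_u_le L _ (fun k => (m k).2) j)) v

end AuxMoment

/-- The first nonzero derivative of the auxiliary sum is too small, by the Schwarz lemma, for a
nonzero algebraic integer of its height. -/
theorem finrank_le_card (hsiegel : IsSiegelBound K C) (hC : 1 ≤ C)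
    (hI : Fintype.card I = Module.finrank ℚ K) {j : J}
    (hj : Function.Injective fun m => E.u m j) : Module.finrank ℚ K ≤ Fintype.card J := by
  classical
  by_contra! hJ
  rw [← hI] at hJ
  obtain ⟨S, N, hS, hN, hparam⟩ := exists_parameters (D := Fintype.card I) hC (by lia)
  set L := 2 * S * N ^ (Fintype.card I - 1) with hL
  have hL1 : 1 ≤ L := Nat.mul_pos (by lia) (Nat.pow_pos hN)
  obtain ⟨ξ, hξ0, hξ, hξzero⟩ := E.exists_auxMoment_eq_zero hsiegel hC hS hN hJ hL
  have hex : ∃ T, ∃ v s, v.length = T ∧ (∀ k, s k < S) ∧ E.auxMoment ξ S v s ≠ 0 := by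
    obtain ⟨v, hv⟩ := E.exists_auxMoment_ne_zero hj S 0 hξ0
    exact ⟨_, v, 0, rfl, fun _ => hS, hv⟩
  obtain ⟨v, s, hv, hs, hne⟩ := Nat.find_spec hex
  set T := Nat.find hex
  have hmin : ∀ v s, v.length < T → (∀ k, s k < S) → E.auxMoment ξ S v s = 0 := fun v s hv hs =>
    by_contra fun h => Nat.find_min hex hv ⟨v, s, rfl, hs, h⟩
  have hT : N ^ Fintype.card I ≤ T := not_lt.1 fun h => hne (hξzero v s (hv.trans_lt h) hs)
  obtain ⟨R, e, hR, he, hlt⟩ := hparam T hT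
  refine (one_le_norm_mul_house_pow φ (E.isIntegral_auxMoment ξ v hs) hne).not_gt
    (lt_of_le_of_lt ?_ hlt)
  have hsmall := E.norm_map_auxMoment_le hC hL1 hξ ((Nat.pow_pos hN).trans_le hT) hR he hmin hv hs
  rw [hI]
  rw [hI] at hsmall
  refine mul_le_mul hsmall (pow_le_pow_left₀ (house_nonneg _) ?_ _) (pow_nonneg (house_nonneg _) _)
    ((norm_nonneg _).trans hsmall)
  simpa only [hv, hI, houseBound] using E.house_auxMoment_le hξ v hs

end ExpSystem

end Transcendence

/-! ### Conjugating linear forms in logarithms -/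

section LogLinearForm

open NumberField

universe u

variable {K : Type u} [Field K] [NumberField K]

/-- The algebraic integer with coordinates `m` in the chosen integral basis. -/
noncomputable def natComb (m : Module.Free.ChooseBasisIndex ℤ (𝓞 K) → ℕ) : 𝓞 K :=
  ∑ k, m k • RingOfIntegers.basis K k

theorem coe_natComb (m : Module.Free.ChooseBasisIndex ℤ (𝓞 K) → ℕ) :
    (natComb m : K) = ∑ k, (m k : K) * integralBasis K k := by
  simp [natComb, integralBasis_apply]

theorem natComb_injective : Function.Injective (natComb (K := K)) := fun m m' h => by
  have hrepr := congrArg (fun x => ⇑((RingOfIntegers.basis K).repr x)) h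
  simp only [natComb, ← Nat.cast_smul_eq_nsmul ℤ, Module.Basis.repr_sum_self] at hrepr
  exact funext fun k => by exact_mod_cast congrFun hrepr k

theorem house_natComb_le {L : ℕ} {m : Module.Free.ChooseBasisIndex ℤ (𝓞 K) → ℕ}
    (hm : ∀ k, m k < L) : house (natComb m : K) ≤ (∑ k, house (integralBasis K k)) * L := by
  rw [coe_natComb, Finset.sum_mul]
  refine (house_sum_le_sum_house _ _).trans (Finset.sum_le_sum fun k _ => ?_)
  rw [house_nat_mul, mul_comm]
  exact mul_le_mul_of_nonneg_left (by exact_mod_cast (hm k).le) (house_nonneg _)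

theorem exists_isIntegral_mul_prod_zpow {ι : Type*} [Fintype ι] (y : ι → K) :
    ∃ δ : ℤ, δ ≠ 0 ∧ ∃ W : ℝ, ∀ (n : ι → ℤ) (E : ℕ), (∀ i, |n i| ≤ E) →
      IsIntegral ℤ ((δ : K) ^ E * ∏ i, y i ^ n i) ∧
        house ((δ : K) ^ E * ∏ i, y i ^ n i) ≤ W ^ E := by
  choose δ hδ W hW using fun i => exists_isIntegral_mul_zpow (y i)
  refine ⟨∏ i, δ i, Finset.prod_ne_zero_iff.2 fun i _ => hδ i, ∏ i, W i, fun n E hn => ?_⟩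
  rw [Int.cast_prod, ← Finset.prod_pow, ← Finset.prod_mul_distrib, ← Finset.prod_pow]
  refine ⟨IsIntegral.prod _ fun i _ => (hW i (n i) E (hn i)).1, house_le_iff.2 fun ψ => ?_⟩
  rw [map_prod, norm_prod]
  exact Finset.prod_le_prod (fun _ _ => norm_nonneg _) fun i _ =>
    (norm_embedding_le_house _ _).trans (hW i (n i) E (hn i)).2

section Galois

variable [IsGalois ℚ K] (φ : K →+* ℂ)

theorem intCast_trace_eq_sum (x : 𝓞 K) :
    ((Algebra.trace ℤ (𝓞 K) x : ℤ) : ℂ) = ∑ σ : K ≃ₐ[ℚ] K, φ (σ x) := by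
  have h : ((Algebra.trace ℤ (𝓞 K) x : ℤ) : K) = ∑ σ : K ≃ₐ[ℚ] K, σ x := by
    rw [← trace_eq_sum_automorphisms, ← Algebra.coe_trace_int, eq_ratCast, Rat.cast_intCast]
  rw [← map_sum, ← h, map_intCast]

theorem abs_trace_le (x : 𝓞 K) :
    (|Algebra.trace ℤ (𝓞 K) x| : ℝ) ≤ Fintype.card (K ≃ₐ[ℚ] K) * house (x : K) := by
  obtain ⟨φ⟩ : Nonempty (K →+* ℂ) := inferInstance
  rw [← Complex.norm_intCast, intCast_trace_eq_sum φ]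
  simpa using norm_sum_le_of_le univ fun σ _ => norm_embedding_algEquiv_le_house φ σ x

theorem exists_abs_trace_natComb_le {ι : Type*} [Finite ι] (β : ι → 𝓞 K) :
    ∃ c : ℕ, ∀ i (L S : ℕ) (m s : Module.Free.ChooseBasisIndex ℤ (𝓞 K) → ℕ), (∀ k, m k < L) →
      (∀ k, s k < S) →
      |Algebra.trace ℤ (𝓞 K) (natComb m * natComb s * β i)| ≤ (c * (L * S) : ℕ) := by
  have := Fintype.ofFinite ι
  set Ω := ∑ k, house (integralBasis K k)
  have hΩ0 : 0 ≤ Ω := Finset.sum_nonneg fun _ _ => house_nonneg _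
  set H := ∑ i, house (β i : K)
  obtain ⟨c, hc⟩ := exists_nat_ge (Fintype.card (K ≃ₐ[ℚ] K) * (Ω * Ω * H))
  refine ⟨c, fun i L S m s hm hs => ?_⟩
  have hβ : house (β i : K) ≤ H :=
    Finset.single_le_sum (f := fun i => house (β i : K)) (fun _ _ => house_nonneg _) (mem_univ i)
  have hhouse : house ((natComb m * natComb s * β i : 𝓞 K) : K) ≤ Ω * L * (Ω * S) * H := by
    change house ((natComb m : K) * natComb s * β i) ≤ _
    refine (house_mul_le _ _).trans (mul_le_mul ((house_mul_le _ _).trans ?_) hβ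
      (house_nonneg _) (by positivity))
    exact mul_le_mul (house_natComb_le hm) (house_natComb_le hs) (house_nonneg _) (by positivity)
  have hreal : (|Algebra.trace ℤ (𝓞 K) (natComb m * natComb s * β i)| : ℝ) ≤ c * (L * S) :=
    calc _ ≤ Fintype.card (K ≃ₐ[ℚ] K) * (Ω * L * (Ω * S) * H) :=
          (abs_trace_le _).trans (by gcongr)
      _ = Fintype.card (K ≃ₐ[ℚ] K) * (Ω * Ω * H) * (L * S) := by ring
      _ ≤ c * (L * S) := by gcongr
  exact_mod_cast hreal

end Galois

variable (φ : K →+* ℂ) {ι : Type*} [Fintype ι] (lam : ι → ℂ) (β : ι → 𝓞 K)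

/-- The value `∑ i, σ(βᵢ) λᵢ` of the linear form in the logarithms `λᵢ` obtained by conjugating
the coefficients by `σ`. -/
noncomputable def logForm (σ : K ≃ₐ[ℚ] K) : ℂ := ∑ i, φ (σ (β i)) * lam i

/-- The frequency attached to `m` by the linear forms `logForm`: with `ω` the integral basis,
`X m k = ∑ i, Tr(natComb m * ωₖ * βᵢ) λᵢ`. -/
noncomputable def logFrequency (m : Module.Free.ChooseBasisIndex ℤ (𝓞 K) → ℕ)
    (k : Module.Free.ChooseBasisIndex ℤ (𝓞 K)) : ℂ :=
  ∑ σ : K ≃ₐ[ℚ] K, φ (σ (natComb m)) * φ (σ (integralBasis K k)) * logForm φ lam β σ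

/-- The value at `s` of the exponential of frequency `logFrequency m`, when `αᵢ = exp λᵢ`. -/
noncomputable def tracePower (α : ι → K) (m s : Module.Free.ChooseBasisIndex ℤ (𝓞 K) → ℕ) : K :=
  ∏ i, α i ^ Algebra.trace ℤ (𝓞 K) (natComb m * natComb s * β i)

theorem sum_logFrequency_mul [IsGalois ℚ K] (m s : Module.Free.ChooseBasisIndex ℤ (𝓞 K) → ℕ) :
    ∑ k, logFrequency φ lam β m k * s k =
      ∑ i, (Algebra.trace ℤ (𝓞 K) (natComb m * natComb s * β i) : ℂ) * lam i := by
  have hterm (σ : K ≃ₐ[ℚ] K) : φ (σ (natComb m)) * φ (σ (natComb s)) * logForm φ lam β σ =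
      ∑ k, φ (σ (natComb m)) * φ (σ (integralBasis K k)) * logForm φ lam β σ * s k := by
    rw [coe_natComb s]
    simp only [map_sum, map_mul, map_natCast, Finset.mul_sum, Finset.sum_mul]
    exact Finset.sum_congr rfl fun k _ => by ring
  calc ∑ k, logFrequency φ lam β m k * s k
      = ∑ σ : K ≃ₐ[ℚ] K, φ (σ (natComb m)) * φ (σ (natComb s)) * logForm φ lam β σ := by
        simp only [hterm, logFrequency, Finset.sum_mul]
        rw [Finset.sum_comm]
    _ = ∑ i, (Algebra.trace ℤ (𝓞 K) (natComb m * natComb s * β i) : ℂ) * lam i := by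
        simp only [intCast_trace_eq_sum φ, logForm, Finset.mul_sum, Finset.sum_mul, map_mul]
        rw [Finset.sum_comm]
        exact Finset.sum_congr rfl fun i _ => Finset.sum_congr rfl fun σ _ => by ring

theorem map_tracePower [IsGalois ℚ K] {α : ι → K} (hα : ∀ i, Complex.exp (lam i) = φ (α i))
    (m s : Module.Free.ChooseBasisIndex ℤ (𝓞 K) → ℕ) :
    φ (tracePower β α m s) = Complex.exp (∑ k, logFrequency φ lam β m k * s k) := by
  simp only [tracePower, sum_logFrequency_mul, Complex.exp_sum, Complex.exp_int_mul, hα,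
    map_prod, map_zpow₀]

theorem norm_logFrequency_le {L : ℕ} {m : Module.Free.ChooseBasisIndex ℤ (𝓞 K) → ℕ}
    (hm : ∀ k, m k < L) (k) :
    ‖logFrequency φ lam β m k‖ ≤ (∑ k, house (integralBasis K k)) *
      (∑ k, house (integralBasis K k)) * (∑ σ, ‖logForm φ lam β σ‖) * L := by
  set Ω := ∑ k, house (integralBasis K k)
  have hbasis : house (integralBasis K k) ≤ Ω :=
    Finset.single_le_sum (f := fun k => house (integralBasis K k)) (fun _ _ => house_nonneg _)
      (mem_univ k)
  have hΩ : 0 ≤ Ω := (house_nonneg _).trans hbasis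
  calc ‖logFrequency φ lam β m k‖ ≤ ∑ σ, Ω * L * Ω * ‖logForm φ lam β σ‖ := by
        refine norm_sum_le_of_le _ fun σ _ => ?_
        rw [norm_mul, norm_mul]
        gcongr
        · exact (norm_embedding_algEquiv_le_house φ σ _).trans (house_natComb_le hm)
        · exact (norm_embedding_algEquiv_le_house φ σ _).trans hbasis
    _ = _ := by rw [← Finset.mul_sum]; ring

theorem embedding_eq_sum_logFrequency [DecidableEq (K ≃ₐ[ℚ] K)] {d : (K ≃ₐ[ℚ] K) → _ → ℂ}
    (hd : ∀ σ τ : K ≃ₐ[ℚ] K,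
      ∑ k, d σ k * φ (τ (integralBasis K k)) = if σ = τ then 1 else 0)
    (m : Module.Free.ChooseBasisIndex ℤ (𝓞 K) → ℕ) {σ : K ≃ₐ[ℚ] K}
    (hσ : logForm φ lam β σ ≠ 0) :
    φ (σ (natComb m)) = ∑ k, d σ k / logForm φ lam β σ * logFrequency φ lam β m k := by
  have hterm (τ : K ≃ₐ[ℚ] K) :
      ∑ k, d σ k / logForm φ lam β σ *
        (φ (τ (natComb m)) * φ (τ (integralBasis K k)) * logForm φ lam β τ) =
      φ (τ (natComb m)) * logForm φ lam β τ / logForm φ lam β σ * if σ = τ then 1 else 0 := by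
    rw [← hd, Finset.mul_sum]
    exact Finset.sum_congr rfl fun k _ => by ring
  simp only [logFrequency, Finset.mul_sum]
  rw [Finset.sum_comm]
  simp only [hterm, mul_ite, mul_one, mul_zero, Finset.sum_ite_eq, Finset.mem_univ, if_true]
  rw [mul_div_cancel_right₀ _ hσ]

open Classical in
theorem logFrequency_eq_sum (m : Module.Free.ChooseBasisIndex ℤ (𝓞 K) → ℕ) (k) :
    logFrequency φ lam β m k = ∑ j : {σ : K ≃ₐ[ℚ] K // logForm φ lam β σ ≠ 0},
      φ (j.1 (integralBasis K k)) * logForm φ lam β j.1 * φ (j.1 (natComb m)) := by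
  rw [← Finset.sum_subtype (univ.filter fun σ => logForm φ lam β σ ≠ 0) (by simp)
    fun σ : K ≃ₐ[ℚ] K => φ (σ (integralBasis K k)) * logForm φ lam β σ * φ (σ (natComb m)),
    Finset.sum_filter_of_ne]
  · exact Finset.sum_congr rfl fun σ _ => by ring
  · rintro σ - h h0
    simp [h0] at h

variable [IsGalois ℚ K]

theorem exists_isIntegral_mul_tracePower (α : ι → K) :
    ∃ δ : ℤ, δ ≠ 0 ∧ ∃ W : ℝ, |(δ : ℝ)| ≤ W ∧
      ∀ (L S : ℕ) (m s : Module.Free.ChooseBasisIndex ℤ (𝓞 K) → ℕ), (∀ k, m k < L) →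
        (∀ k, s k < S) → IsIntegral ℤ ((δ : K) ^ (L * S) * tracePower β α m s) ∧
          house ((δ : K) ^ (L * S) * tracePower β α m s) ≤ W ^ (L * S) := by
  obtain ⟨δ, hδ, W, hW⟩ := exists_isIntegral_mul_prod_zpow α
  obtain ⟨c, hc⟩ := exists_abs_trace_natComb_le β
  have hδW : |((δ ^ c : ℤ) : ℝ)| ≤ W ^ c := by
    have h := (hW 0 c (by simp)).2
    simp only [Pi.zero_apply, zpow_zero, Finset.prod_const_one, mul_one] at h
    rwa [← Int.cast_pow, house_intCast, Int.cast_abs] at h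
  refine ⟨δ ^ c, pow_ne_zero _ hδ, W ^ c, hδW, fun L S m s hm hs => ?_⟩
  rw [Int.cast_pow, ← pow_mul, ← pow_mul]
  exact hW _ _ fun i => hc i L S m s hm hs

open Classical in
theorem eventually_exists_expSystem {α : ι → K} (hα : ∀ i, Complex.exp (lam i) = φ (α i)) :
    ∀ᶠ C : ℝ in atTop, ∃ E : ExpSystem φ (Module.Free.ChooseBasisIndex ℤ (𝓞 K))
      {σ : K ≃ₐ[ℚ] K // logForm φ lam β σ ≠ 0} C, ∀ m j, E.u m j = j.1 (natComb m) := by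
  obtain ⟨d, hd⟩ := exists_dual_embedding φ
  obtain ⟨δ, hδ, W, hδW, hW⟩ := exists_isIntegral_mul_tracePower β α
  have hW0 : 0 ≤ W := (abs_nonneg _).trans hδW
  filter_upwards [eventually_ge_atTop (∑ k, house (integralBasis K k)),
    eventually_ge_atTop ((∑ k, house (integralBasis K k)) * (∑ k, house (integralBasis K k)) *
      (∑ σ, ‖logForm φ lam β σ‖)),
    eventually_ge_atTop (∑ σ, ∑ k, ‖d σ k / logForm φ lam β σ‖),
    eventually_ge_atTop W] with C hCu hCX hCd hCW
  refine ⟨{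
    u := fun m j => j.1 (natComb m)
    isIntegral_u := fun m j => (natComb m).2.map (j.1 : K →+* K).toIntAlgHom
    house_u_le := fun L m hm j => (house_algEquiv_le _ _).trans
      ((house_natComb_le hm).trans (by gcongr))
    X := logFrequency φ lam β
    norm_X_le := fun L m hm k => (norm_logFrequency_le φ lam β hm k).trans (by gcongr)
    toU := fun j k => d j.1 k / logForm φ lam β j.1
    u_eq := fun m j => embedding_eq_sum_logFrequency φ lam β hd m j.2
    sum_norm_toU_le := fun j => le_trans (Finset.single_le_sum
      (f := fun σ => ∑ k, ‖d σ k / logForm φ lam β σ‖)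
      (fun _ _ => Finset.sum_nonneg fun _ _ => norm_nonneg _) (mem_univ j.1)) hCd
    toX := fun k j => φ (j.1 (integralBasis K k)) * logForm φ lam β j.1
    X_eq := fun m k => logFrequency_eq_sum φ lam β m k
    value := fun M m s => (δ : K) ^ M * tracePower β α m s
    denom := fun M => (δ : ℂ) ^ M
    denom_ne_zero := fun M => pow_ne_zero _ (Int.cast_ne_zero.2 hδ)
    norm_denom_le := fun M => by
      rw [norm_pow, Complex.norm_intCast]
      exact pow_le_pow_left₀ (abs_nonneg _) (hδW.trans hCW) M
    isIntegral_value := fun L S m s hm hs => (hW L S m s hm hs).1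
    house_value_le := fun L S m s hm hs => (hW L S m s hm hs).2.trans (by gcongr)
    map_value := fun M m s => by
      rw [map_mul, map_pow, map_intCast, map_tracePower φ lam β hα] }, fun _ _ => rfl⟩

/-- Otherwise fewer than `[K : ℚ]` of the conjugate forms are nonzero, contradicting
`ExpSystem.finrank_le_card`. -/
theorem logForm_eq_zero_of_logForm_eq_zero {α : ι → K}
    (hα : ∀ i, Complex.exp (lam i) = φ (α i)) {τ : K ≃ₐ[ℚ] K} (hτ : logForm φ lam β τ = 0)
    (σ : K ≃ₐ[ℚ] K) : logForm φ lam β σ = 0 := by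
  classical
  by_contra hσ
  obtain ⟨C, ⟨E, hE⟩, hsiegel, hC⟩ := ((eventually_exists_expSystem φ lam β hα).and
    ((eventually_isSiegelBound K).and (eventually_ge_atTop 1))).exists
  have hI : Fintype.card (Module.Free.ChooseBasisIndex ℤ (𝓞 K)) = Module.finrank ℚ K := by
    rw [← Module.finrank_eq_card_chooseBasisIndex, RingOfIntegers.rank]
  have hinj : Function.Injective fun m => E.u m ⟨σ, hσ⟩ := by
    simp only [hE]
    exact σ.injective.comp (RingOfIntegers.coe_injective.comp natComb_injective)
  have hcard : Fintype.card {σ : K ≃ₐ[ℚ] K // logForm φ lam β σ ≠ 0} < Module.finrank ℚ K := by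
    rw [← IsGalois.card_aut_eq_finrank ℚ K, Nat.card_eq_fintype_card]
    exact Fintype.card_subtype_lt (x := τ) (not_not.2 hτ)
  exact (E.finrank_le_card hsiegel hC hI hinj).not_gt hcard

end LogLinearForm

/-! ### Abelian summation and boundary values of the logarithm -/

section Abel

variable {E : Type*} [NormedAddCommGroup E] [NormedSpace ℝ E]

theorem norm_sum_Ico_sub_smul_le_of_antitone {w : ℕ → ℝ} (hw : Antitone w) {G : ℕ → E} {m n : ℕ}
    (hmn : m ≤ n) {B : ℝ} (hG : ∀ i ∈ Ico m n, ‖G i‖ ≤ B) :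
    ‖∑ i ∈ Ico m n, (w (i + 1) - w i) • G i‖ ≤ B * (w m - w n) := by
  have htelescope : ∑ i ∈ Ico m n, (w i - w (i + 1)) = w m - w n := by
    rw [sum_Ico_eq_sub _ hmn, sum_range_sub', sum_range_sub', sub_sub_sub_cancel_left]
  rw [← htelescope, mul_sum]
  refine norm_sum_le_of_le _ fun i hi => ?_
  have hdiff : 0 ≤ w i - w (i + 1) := sub_nonneg.2 (hw i.le_succ)
  rw [norm_smul, norm_sub_rev, Real.norm_of_nonneg hdiff, mul_comm]
  exact mul_le_mul_of_nonneg_right (hG i hi) hdiff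

theorem norm_tsum_smul_le_of_antitone {g : ℕ → E} {w : ℕ → ℝ} (hw : Antitone w)
    (hw0 : Tendsto w atTop (𝓝 0)) {C ε : ℝ} (hC : ∀ N, ‖∑ i ∈ range N, g i‖ ≤ C) {N₀ : ℕ}
    (hε : ∀ N ≥ N₀, ‖∑ i ∈ range N, g i‖ ≤ ε) (hs : Summable fun n => w n • g n) :
    ‖∑' n, w n • g n‖ ≤ C * (w 0 - w N₀) + ε * w N₀ := by
  have hpos : ∀ n, 0 ≤ w n := fun n => hw.le_of_tendsto hw0 n
  have hε0 : 0 ≤ ε := (norm_nonneg _).trans (hε N₀ le_rfl)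
  have hlim : Tendsto (fun k => C * w (N₀ + k) + (C * (w 0 - w N₀) + ε * w N₀)) atTop
      (𝓝 (C * (w 0 - w N₀) + ε * w N₀)) := by
    simpa [add_comm N₀] using
      (((tendsto_add_atTop_iff_nat N₀).2 hw0).const_mul C).add_const (C * (w 0 - w N₀) + ε * w N₀)
  have hsum : Tendsto (fun k => ∑ i ∈ range (N₀ + k + 1), w i • g i) atTop
      (𝓝 (∑' n, w n • g n)) := by
    simpa [add_comm N₀, add_assoc] using
      (tendsto_add_atTop_iff_nat (N₀ + 1)).2 hs.hasSum.tendsto_sum_nat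
  refine le_of_tendsto_of_tendsto' hsum.norm hlim fun k => ?_
  have hhead := norm_sum_Ico_sub_smul_le_of_antitone hw N₀.zero_le
    (G := fun i => ∑ j ∈ range (i + 1), g j) fun i _ => hC (i + 1)
  have htail := norm_sum_Ico_sub_smul_le_of_antitone hw (Nat.le_add_right N₀ k)
    (G := fun i => ∑ j ∈ range (i + 1), g j) fun i hi => hε (i + 1)
      ((mem_Ico.1 hi).1.trans i.le_succ)
  have hlast : ‖w (N₀ + k) • ∑ i ∈ range (N₀ + k + 1), g i‖ ≤ C * w (N₀ + k) := by
    rw [norm_smul, Real.norm_of_nonneg (hpos _), mul_comm]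
    exact mul_le_mul_of_nonneg_right (hC _) (hpos _)
  rw [sum_range_by_parts, Nat.add_sub_cancel,
    ← sum_range_add_sum_Ico _ (Nat.le_add_right N₀ k), range_eq_Ico N₀]
  refine (norm_sub_le _ _).trans ((add_le_add hlast (norm_add_le_of_le hhead htail)).trans ?_)
  nlinarith [mul_nonneg hε0 (hpos (N₀ + k))]

theorem tendsto_tsum_smul_zero_of_antitone {ι : Type*} {l : Filter ι} {g : ℕ → E}
    (hg : Tendsto (fun N => ∑ i ∈ range N, g i) atTop (𝓝 0)) {w : ι → ℕ → ℝ}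
    (hw : ∀ᶠ t in l, Antitone (w t) ∧ Tendsto (w t) atTop (𝓝 0) ∧ Summable fun n => w t n • g n)
    (hw1 : ∀ n, Tendsto (fun t => w t n) l (𝓝 1)) :
    Tendsto (fun t => ∑' n, w t n • g n) l (𝓝 0) := by
  obtain ⟨C, hC⟩ := (Metric.isBounded_range_of_tendsto _ hg).exists_norm_le
  refine Metric.tendsto_nhds.2 fun ε hε => ?_
  obtain ⟨N₀, hN₀⟩ := Metric.tendsto_atTop.1 hg (ε / 2) (half_pos hε)
  have hbound : Tendsto (fun t => C * (w t 0 - w t N₀) + ε / 2 * w t N₀) l (𝓝 (ε / 2)) := by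
    simpa using (((hw1 0).sub (hw1 N₀)).const_mul C).add ((hw1 N₀).const_mul (ε / 2))
  filter_upwards [hw, hbound.eventually_lt_const (half_lt_self hε)] with t ⟨hanti, hlim, hsum⟩ hlt
  rw [dist_zero_right]
  refine (norm_tsum_smul_le_of_antitone hanti hlim (fun N => hC _ ⟨N, rfl⟩) (fun N hN => ?_)
    hsum).trans_lt hlt
  simpa using (hN₀ N hN).le

theorem antitone_max_one_rpow_neg {σ : ℝ} (hσ : 0 ≤ σ) :
    Antitone fun n : ℕ => (max (n : ℝ) 1) ^ (-σ) := fun m n hmn =>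
  Real.rpow_le_rpow_of_nonpos (by positivity) (max_le_max_right 1 (Nat.cast_le.2 hmn))
    (neg_nonpos.2 hσ)

theorem tendsto_max_one_rpow_neg {σ : ℝ} (hσ : 0 < σ) :
    Tendsto (fun n : ℕ => (max (n : ℝ) 1) ^ (-σ)) atTop (𝓝 0) :=
  (tendsto_rpow_neg_atTop hσ).comp
    (tendsto_atTop_mono (fun _ => le_max_left _ _) tendsto_natCast_atTop_atTop)

theorem LSeries_term_one_add (f : ℕ → ℂ) (σ : ℝ) (n : ℕ) :
    LSeries.term f (1 + σ) n = (max (n : ℝ) 1) ^ (-σ) • (f n / n) := by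
  rcases n.eq_zero_or_pos with rfl | hn
  · simp
  have hn0 : (n : ℂ) ≠ 0 := Nat.cast_ne_zero.2 hn.ne'
  rw [LSeries.term_of_ne_zero hn.ne', max_eq_left (Nat.one_le_cast.2 hn), Complex.real_smul,
    Complex.ofReal_cpow n.cast_nonneg, Complex.cpow_add _ _ hn0, Complex.cpow_one]
  push_cast
  rw [Complex.cpow_neg]
  field_simp

theorem tendsto_LSeries_one_add_zero {f : ℕ → ℂ}
    (hf : Tendsto (fun N => ∑ i ∈ range N, f i / i) atTop (𝓝 0))
    (hs : ∀ σ : ℝ, 0 < σ → LSeriesSummable f (1 + σ)) :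
    Tendsto (fun σ : ℝ => LSeries f (1 + σ)) (𝓝[>] 0) (𝓝 0) := by
  simp only [LSeries, LSeries_term_one_add]
  refine tendsto_tsum_smul_zero_of_antitone hf ?_ fun n => ?_
  · filter_upwards [self_mem_nhdsWithin] with σ hσ
    refine ⟨antitone_max_one_rpow_neg (Set.mem_Ioi.1 hσ).le, tendsto_max_one_rpow_neg hσ, ?_⟩
    simpa only [LSeriesSummable, funext (LSeries_term_one_add f σ)] using hs σ hσ
  · have hcont : Continuous fun σ : ℝ => max (n : ℝ) 1 ^ (-σ) :=
      continuous_const.rpow continuous_neg fun _ => Or.inl (by positivity)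
    simpa using (hcont.tendsto 0).mono_left nhdsWithin_le_nhds

theorem one_sub_re_pos {z : ℂ} (hz : ‖z‖ = 1) (hz1 : z ≠ 1) : 0 < (1 - z).re := by
  rw [Complex.sub_re, Complex.one_re, sub_pos, ← hz]
  refine (Complex.re_le_norm z).lt_of_ne fun h => hz1 ?_
  have hreal := Complex.eq_coe_norm_of_nonneg (Complex.re_eq_norm.1 h)
  rwa [hz, Complex.ofReal_one] at hreal

theorem cauchySeq_sum_pow_div {z : ℂ} (hz : ‖z‖ = 1) (hz1 : z ≠ 1) :
    CauchySeq fun N => ∑ i ∈ range N, z ^ i / (i : ℂ) := by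
  have hcauchy : CauchySeq fun N => ∑ i ∈ range N, (1 / ((i : ℝ) + 1)) • z ^ (i + 1) := by
    refine Antitone.cauchySeq_series_mul_of_tendsto_zero_of_bounded (b := 2 / ‖z - 1‖)
      (fun a b hab => ?_) tendsto_one_div_add_atTop_nhds_zero_nat fun N => ?_
    · gcongr
    · simp only [pow_succ]
      rw [← sum_mul, geom_sum_eq hz1, norm_mul, hz, mul_one, norm_div]
      gcongr
      calc ‖z ^ N - 1‖ ≤ ‖z ^ N‖ + ‖(1 : ℂ)‖ := norm_sub_le _ _
        _ = 2 := by rw [norm_pow, hz]; norm_num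
  refine (cauchySeq_shift 1).1 ?_
  convert hcauchy using 2 with N
  rw [sum_range_succ', Nat.cast_zero, div_zero, add_zero]
  refine sum_congr rfl fun i _ => ?_
  rw [Complex.real_smul]
  push_cast
  ring

theorem tendsto_sum_pow_div {z : ℂ} (hz : ‖z‖ = 1) (hz1 : z ≠ 1) :
    Tendsto (fun N => ∑ i ∈ range N, z ^ i / (i : ℂ)) atTop (𝓝 (-Complex.log (1 - z))) := by
  obtain ⟨l, hl⟩ := cauchySeq_tendsto_of_complete (cauchySeq_sum_pow_div hz hz1)
  have habel := tendsto_map'_iff.1 (Complex.tendsto_tsum_powerSeries_nhdsWithin_lt hl)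
  have hlog : Tendsto (fun x : ℝ => -Complex.log (1 - z * x)) (𝓝[<] 1)
      (𝓝 (-Complex.log (1 - z))) := by
    have hcont : ContinuousAt (fun x : ℝ => -Complex.log (1 - z * x)) 1 :=
      (ContinuousAt.clog (by fun_prop) (Or.inl (by simpa using one_sub_re_pos hz hz1))).neg
    simpa using hcont.tendsto.mono_left nhdsWithin_le_nhds
  have hlogl : Tendsto (fun x : ℝ => -Complex.log (1 - z * x)) (𝓝[<] 1) (𝓝 l) := by
    refine habel.congr' ?_
    filter_upwards [Ioo_mem_nhdsLT (show (-1 : ℝ) < 1 by norm_num)] with x hx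
    have hnorm : ‖z * (x : ℂ)‖ < 1 := by
      rw [norm_mul, hz, one_mul, Complex.norm_real, Real.norm_eq_abs]
      exact abs_lt.2 hx
    rw [← (Complex.hasSum_taylorSeries_neg_log hnorm).tsum_eq]
    exact tsum_congr fun n => by rw [mul_pow, div_mul_eq_mul_div]
  rwa [tendsto_nhds_unique hlogl hlog] at hl

theorem eq_zero_of_tendsto_mul_sum_one_div {c l : ℂ}
    (h : Tendsto (fun N => c * ∑ i ∈ range N, 1 / (i : ℂ)) atTop (𝓝 l)) : c = 0 := by
  by_contra hc
  have hlim : Tendsto (fun N => ∑ i ∈ range (N + 1), 1 / (i : ℂ)) atTop (𝓝 (c⁻¹ * l)) := by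
    simpa only [inv_mul_cancel_left₀ hc, Function.comp_def] using
      (h.const_mul c⁻¹).comp (tendsto_add_atTop_nat 1)
  refine not_tendsto_nhds_of_tendsto_atTop Real.tendsto_sum_range_one_div_nat_succ_atTop _
    (((Complex.continuous_re.tendsto _).comp hlim).congr fun N => ?_)
  have hreal : ∑ i ∈ range (N + 1), 1 / (i : ℂ) =
      ((∑ i ∈ range N, 1 / ((i : ℝ) + 1) : ℝ) : ℂ) := by
    simp [sum_range_succ']
  rw [Function.comp_apply, hreal, Complex.ofReal_re]

end Abel

/-! ### Periodic functions and their twists -/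

section Periodic

open NumberField ZMod

variable {q : ℕ} [NeZero q]

theorem natCast_mul_eq_sum_dft_mul_pow (Φ : ZMod q → ℂ) (n : ℕ) :
    (q : ℂ) * Φ n = ∑ a, 𝓕 Φ a * stdAddChar a ^ n := by
  have hinv := congr_fun (dft.symm_apply_apply Φ) (n : ZMod q)
  rw [invDFT_apply, smul_eq_mul] at hinv
  rw [← hinv, mul_inv_cancel_left₀ (NeZero.ne _)]
  refine sum_congr rfl fun a _ => ?_
  rw [smul_eq_mul, mul_comm, ← AddChar.map_nsmul_eq_pow, nsmul_eq_mul, mul_comm a]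

theorem stdAddChar_ne_one {a : ZMod q} (ha : a ≠ 0) : stdAddChar a ≠ (1 : ℂ) := fun h =>
  ha (injective_stdAddChar (h.trans (AddChar.map_zero_eq_one _).symm))

theorem tendsto_sum_periodic_div (Φ : ZMod q → ℂ) :
    Tendsto (fun N => (q : ℂ) * ∑ i ∈ range N, Φ i / i - (∑ a, Φ a) * ∑ i ∈ range N, 1 / (i : ℂ))
      atTop (𝓝 (-∑ a, 𝓕 Φ a * Complex.log (1 - stdAddChar a))) := by
  have hsplit : ∀ N, (q : ℂ) * ∑ i ∈ range N, Φ i / i - (∑ a, Φ a) * ∑ i ∈ range N, 1 / (i : ℂ) =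
      ∑ a ∈ univ.erase 0, 𝓕 Φ a * ∑ i ∈ range N, stdAddChar a ^ i / (i : ℂ) := fun N => by
    have hall : (q : ℂ) * ∑ i ∈ range N, Φ i / i =
        ∑ a, 𝓕 Φ a * ∑ i ∈ range N, stdAddChar a ^ i / (i : ℂ) := by
      simp only [mul_sum, ← mul_div_assoc, natCast_mul_eq_sum_dft_mul_pow, sum_div]
      exact sum_comm
    rw [hall, ← sum_erase_add univ _ (mem_univ 0), ← dft_apply_zero Φ]
    simp
  have hlim : -∑ a, 𝓕 Φ a * Complex.log (1 - stdAddChar a) =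
      ∑ a ∈ univ.erase 0, 𝓕 Φ a * -Complex.log (1 - stdAddChar a) := by
    rw [← sum_erase_add univ _ (mem_univ 0)]
    simp
  simp only [hsplit, hlim]
  refine tendsto_finsetSum _ fun a ha => Tendsto.const_mul _ ?_
  exact tendsto_sum_pow_div (AddChar.norm_apply _ a) (stdAddChar_ne_one (ne_of_mem_erase ha))

theorem tendsto_sum_periodic_div_zero_iff (Φ : ZMod q → ℂ) :
    Tendsto (fun N => ∑ i ∈ range N, Φ i / i) atTop (𝓝 0) ↔
      ∑ a, Φ a = 0 ∧ ∑ a, 𝓕 Φ a * Complex.log (1 - stdAddChar a) = 0 := by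
  have hq : (q : ℂ) ≠ 0 := NeZero.ne _
  have hlim := tendsto_sum_periodic_div Φ
  constructor
  · intro h
    have hmul : Tendsto (fun N => (q : ℂ) * ∑ i ∈ range N, Φ i / i) atTop (𝓝 0) := by
      simpa using h.const_mul (q : ℂ)
    have hsum : ∑ a, Φ a = 0 :=
      eq_zero_of_tendsto_mul_sum_one_div ((hmul.sub hlim).congr fun N => sub_sub_cancel _ _)
    simp only [hsum, zero_mul, sub_zero] at hlim
    exact ⟨hsum, neg_eq_zero.1 (tendsto_nhds_unique hlim hmul)⟩
  · rintro ⟨hsum, hlog⟩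
    simp only [hsum, hlog, zero_mul, sub_zero, neg_zero] at hlim
    simpa [inv_mul_cancel_left₀ hq] using hlim.const_mul (q : ℂ)⁻¹

theorem stdAddChar_one_pow_val (a : ZMod q) :
    (stdAddChar (1 : ZMod q) : ℂ) ^ a.val = stdAddChar a := by
  rw [← AddChar.map_nsmul_eq_pow, nsmul_one, natCast_zmod_val]

theorem isPrimitiveRoot_stdAddChar_one : IsPrimitiveRoot (stdAddChar (1 : ZMod q) : ℂ) q := by
  refine IsPrimitiveRoot.mk_of_lt _ (NeZero.pos q) ?_ fun l hl hlq h => ?_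
  · rw [← AddChar.map_nsmul_eq_pow]
    simp
  · rw [← AddChar.map_nsmul_eq_pow, nsmul_one] at h
    refine stdAddChar_ne_one (fun h0 => ?_) h
    exact hlq.not_ge (Nat.le_of_dvd hl ((natCast_eq_zero_iff l q).1 h0))

theorem exists_ringOfIntegers_map_eq_stdAddChar_one {K : Type*} [Field K] {ζ : K}
    (hζ : IsPrimitiveRoot ζ q) (φ : K →+* ℂ) :
    ∃ z : 𝓞 K, (z : K) ^ q = 1 ∧ φ z = stdAddChar (1 : ZMod q) := by
  obtain ⟨k, -, hk⟩ := (hζ.map_of_injective φ.injective).eq_pow_of_pow_eq_one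
    (isPrimitiveRoot_stdAddChar_one (q := q)).pow_eq_one
  obtain ⟨z, hz⟩ : ∃ z : 𝓞 K, (z : K) = ζ ^ k :=
    ⟨⟨ζ ^ k, (hζ.isIntegral (NeZero.pos q)).pow k⟩, rfl⟩
  refine ⟨z, ?_, ?_⟩
  · rw [hz, pow_right_comm, hζ.pow_eq_one, one_pow]
  · rw [hz, map_pow, hk]

theorem exists_algEquiv_apply_eq_pow {K L : Type*} [Field K] [Field L] [Algebra K L]
    [IsCyclotomicExtension {q} K L] (hirr : Irreducible (Polynomial.cyclotomic q K)) {z : L}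
    (hz : z ^ q = 1) (g : (ZMod q)ˣ) : ∃ σ : L ≃ₐ[K] L, σ z = z ^ (g : ZMod q).val := by
  have hζ := IsCyclotomicExtension.zeta_spec q K L
  have hpow := hζ.pow_of_coprime _ (val_coe_unit_coprime g)
  obtain ⟨k, -, rfl⟩ := hζ.eq_pow_of_pow_eq_one hz
  refine ⟨IsCyclotomicExtension.fromZetaAut hpow hirr, ?_⟩
  rw [map_pow, IsCyclotomicExtension.fromZetaAut_spec, pow_right_comm]

/-- The Fourier coefficient at `a` of an integer-valued function on `ZMod q`, computed in a ring of
integers with the root of unity `z` in place of `exp (2πi / q)`. -/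
noncomputable def integralDFT {K : Type*} [Field K] (z : 𝓞 K) (F : ZMod q → ℤ) (a : ZMod q) : 𝓞 K :=
  ∑ b, F b * z ^ (-(b * a)).val

theorem map_algEquiv_integralDFT {K : Type*} [Field K] [NumberField K] (φ : K →+* ℂ) {z : 𝓞 K}
    (hz : φ z = stdAddChar (1 : ZMod q)) {σ : K ≃ₐ[ℚ] K} {g : (ZMod q)ˣ}
    (hσ : σ z = z ^ (g : ZMod q).val) (F : ZMod q → ℤ) (a : ZMod q) :
    φ (σ (integralDFT z F a)) = 𝓕 (fun b => (F (g⁻¹.val * b) : ℂ)) a := by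
  rw [dft_comp_unitMul (fun b => (F b : ℂ)), inv_inv, dft_apply]
  simp only [integralDFT, map_sum, map_mul, map_pow, map_intCast, hσ, hz, smul_eq_mul]
  refine sum_congr rfl fun b _ => ?_
  rw [stdAddChar_one_pow_val, ← AddChar.map_nsmul_eq_pow, nsmul_eq_mul, natCast_zmod_val, mul_comm,
    mul_left_comm b, mul_comm (g : ZMod q), neg_mul]

theorem exp_log_one_sub_stdAddChar (a : ZMod q) :
    Complex.exp (Complex.log (1 - stdAddChar a)) = if a = 0 then 1 else 1 - stdAddChar a := by
  split_ifs with ha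
  · simp [ha]
  · exact Complex.exp_log (sub_ne_zero.2 (stdAddChar_ne_one ha).symm)

theorem sum_dft_unit_mul_mul_log_eq_zero {F : ZMod q → ℤ}
    (hF : ∑ a, 𝓕 (fun b => (F b : ℂ)) a * Complex.log (1 - stdAddChar a) = 0) (h : (ZMod q)ˣ) :
    ∑ a, 𝓕 (fun b : ZMod q => (F (h * b) : ℂ)) a * Complex.log (1 - stdAddChar a) = 0 := by
  have : IsCyclotomicExtension {q} ℚ (CyclotomicField q ℚ) :=
    CyclotomicField.isCyclotomicExtension q ℚ
  have : IsGalois ℚ (CyclotomicField q ℚ) := IsCyclotomicExtension.isGalois {q} ℚ _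
  have hirr := Polynomial.cyclotomic.irreducible_rat (NeZero.pos q)
  have φ : CyclotomicField q ℚ →+* ℂ := Classical.arbitrary _
  obtain ⟨z, hz, hφz⟩ := exists_ringOfIntegers_map_eq_stdAddChar_one
    (IsCyclotomicExtension.zeta_spec q ℚ (CyclotomicField q ℚ)) φ
  obtain ⟨σ, hσ⟩ := exists_algEquiv_apply_eq_pow hirr hz h⁻¹
  obtain ⟨τ, hτ⟩ := exists_algEquiv_apply_eq_pow hirr hz (1 : (ZMod q)ˣ)
  have hlog (a : ZMod q) : Complex.exp (Complex.log (1 - stdAddChar a)) =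
      φ (if a = 0 then 1 else 1 - z ^ a.val) := by
    rw [exp_log_one_sub_stdAddChar, apply_ite φ, map_sub, map_one, map_pow, hφz,
      stdAddChar_one_pow_val]
  have hτ0 : logForm φ (fun a => Complex.log (1 - stdAddChar a)) (integralDFT z F) τ = 0 := by
    simpa only [logForm, map_algEquiv_integralDFT φ hφz hτ, inv_one, Units.val_one, one_mul]
      using hF
  simpa only [logForm, map_algEquiv_integralDFT φ hφz hσ, inv_inv] using
    logForm_eq_zero_of_logForm_eq_zero φ _ _ hlog hτ0 σ

theorem tendsto_sum_unit_mul_div_zero {F : ZMod q → ℤ}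
    (hF : Tendsto (fun N => ∑ i ∈ range N, (F (i : ℕ) : ℂ) / i) atTop (𝓝 0)) (h : (ZMod q)ˣ) :
    Tendsto (fun N => ∑ i ∈ range N, (F (h * (i : ℕ)) : ℂ) / i) atTop (𝓝 0) := by
  obtain ⟨hsum, hlog⟩ := (tendsto_sum_periodic_div_zero_iff fun a => (F a : ℂ)).1 hF
  refine (tendsto_sum_periodic_div_zero_iff fun a : ZMod q => (F (h * a) : ℂ)).2
    ⟨?_, sum_dft_unit_mul_mul_log_eq_zero hlog h⟩
  exact (Equiv.sum_comp h.mulLeft fun a => (F a : ℂ)).trans hsum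

end Periodic

/-! ### Dirichlet series of periodic functions -/

section DirichletSeries

variable {q : ℕ}

theorem exists_mem_factoredNumbers_mul_coprime_eq [NeZero q] {n : ℕ} (hn : n ≠ 0) :
    ∃ b ∈ Nat.factoredNumbers q.primeFactors, ∃ m, m.Coprime q ∧ b * m = n := by
  refine ⟨_, Nat.prod_mem_factoredNumbers q.primeFactors n,
    (n.primeFactorsList.filter (· ∉ q.primeFactors)).prod, ?_, ?_⟩
  · refine Nat.coprime_list_prod_left_iff.2 fun p hp => ?_
    simp only [List.mem_filter, decide_eq_true_eq] at hp
    have hprime := Nat.prime_of_mem_primeFactorsList hp.1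
    exact hprime.coprime_iff_not_dvd.2 fun hpq =>
      hp.2 (Nat.mem_primeFactors.2 ⟨hprime, hpq, NeZero.ne q⟩)
  · have hprod := Multiset.prod_filter_mul_prod_filter_not (s := (n.primeFactorsList : Multiset ℕ))
      (· ∈ q.primeFactors)
    simpa only [Multiset.filter_coe, Multiset.prod_coe, Nat.prod_primeFactorsList hn] using hprod

theorem coprime_of_mem_factoredNumbers_primeFactors {b m : ℕ}
    (hb : b ∈ Nat.factoredNumbers q.primeFactors) (hm : m.Coprime q) : b.Coprime m :=
  Nat.coprime_of_dvd fun _ hp hpb hpm =>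
    hp.not_dvd_one (hm ▸ Nat.dvd_gcd hpm
      (Nat.dvd_of_mem_primeFactors (Nat.mem_factoredNumbers'.1 hb _ hp hpb)))

theorem injective_factoredNumbers_mul_coprime :
    Function.Injective fun x : Nat.factoredNumbers q.primeFactors × {m : ℕ | m.Coprime q} =>
      (x.1 : ℕ) * x.2 := by
  rintro ⟨⟨b, hb⟩, ⟨m, hm⟩⟩ ⟨⟨b', hb'⟩, ⟨m', hm'⟩⟩ (h : b * m = b' * m')
  obtain rfl : b = b' := Nat.dvd_antisymm
    ((coprime_of_mem_factoredNumbers_primeFactors hb hm').dvd_of_dvd_mul_right (h ▸ ⟨m, rfl⟩))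
    ((coprime_of_mem_factoredNumbers_primeFactors hb' hm).dvd_of_dvd_mul_right (h ▸ ⟨m', rfl⟩))
  obtain rfl : m = m' := Nat.eq_of_mul_eq_mul_left
    (Nat.pos_of_ne_zero (Nat.ne_zero_of_mem_factoredNumbers hb)) h
  rfl

theorem LSeries_dirichletCharacter_eq_tsum_coprime (χ : DirichletCharacter ℂ q) (s : ℂ) :
    LSeries (χ ·) s = ∑' m : {m : ℕ | m.Coprime q}, LSeries.term (χ ·) s m := by
  refine (tsum_subtype_eq_of_support_subset fun n hn => ?_).symm
  by_contra hcop
  have hχ : χ n = 0 := χ.map_nonunit fun hu => hcop ((ZMod.isUnit_iff_coprime n q).1 hu)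
  simp [LSeries.term_def, hχ] at hn

theorem LSeries_eq_tsum_factoredNumbers_mul_LSeries [NeZero q] {χ : DirichletCharacter ℂ q}
    {c : ZMod q → ℂ} (hc : ∀ (u : (ZMod q)ˣ) a, c (u * a) = χ u * c a) {s : ℂ} (hs : 1 < s.re) :
    LSeries (c ·) s =
      (∑' b : Nat.factoredNumbers q.primeFactors, LSeries.term (c ·) s b) * LSeries (χ ·) s := by
  rw [LSeries_dirichletCharacter_eq_tsum_coprime, tsum_mul_tsum_of_summable_norm
    ((ZMod.LSeriesSummable_of_one_lt_re c hs).norm.subtype _)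
    ((ZMod.LSeriesSummable_of_one_lt_re χ hs).norm.subtype _), LSeries,
    ← injective_factoredNumbers_mul_coprime.tsum_eq]
  · refine tsum_congr fun ⟨⟨b, hb⟩, ⟨m, hm⟩⟩ => ?_
    have hb0 := Nat.ne_zero_of_mem_factoredNumbers hb
    rcases eq_or_ne m 0 with rfl | hm0
    · simp
    have hmul := hc (ZMod.unitOfCoprime m hm) b
    rw [ZMod.coe_unitOfCoprime] at hmul
    rw [LSeries.term_of_ne_zero (mul_ne_zero hb0 hm0), LSeries.term_of_ne_zero hb0,
      LSeries.term_of_ne_zero hm0, Nat.cast_mul, Nat.cast_mul, mul_comm (b : ZMod q), hmul,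
      Complex.natCast_mul_natCast_cpow, mul_comm (χ _), mul_div_mul_comm]
  · intro n hn
    have hn0 : n ≠ 0 := fun h => hn (by rw [h, LSeries.term_zero])
    obtain ⟨b, hb, m, hm, rfl⟩ := exists_mem_factoredNumbers_mul_coprime_eq (q := q) hn0
    exact ⟨⟨⟨b, hb⟩, ⟨m, hm⟩⟩, rfl⟩

theorem hasSum_inv_factoredNumbers (s : Finset ℕ) :
    HasSum (fun b : Nat.factoredNumbers s => (b : ℝ)⁻¹) (∏ p ∈ s with p.Prime, (1 - (p : ℝ)⁻¹)⁻¹) :=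
  (EulerProduct.summable_and_hasSum_factoredNumbers_prod_filter_prime_geometric
    (f := (invMonoidWithZeroHom : ℝ →*₀ ℝ).toMonoidHom.comp (Nat.castRingHom ℝ).toMonoidHom)
    (fun hp => (Real.norm_of_nonneg (inv_nonneg.2 (Nat.cast_nonneg _))).trans_lt
      (inv_lt_one_of_one_lt₀ (Nat.one_lt_cast.2 hp.one_lt))) s).2

theorem prod_primeFactors_one_sub_inv_inv [NeZero q] :
    ∏ p ∈ q.primeFactors, (1 - (p : ℝ)⁻¹)⁻¹ = q / q.totient := by
  have htot : (q.totient : ℝ) = q * ∏ p ∈ q.primeFactors, (1 - (p : ℝ)⁻¹) := by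
    simpa using congrArg (Rat.cast : ℚ → ℝ) (Nat.totient_eq_mul_prod_factors q)
  rw [prod_inv_distrib, htot, div_mul_cancel_left₀ (NeZero.ne (q : ℝ))]

theorem hasSum_inv_factoredNumbers_primeFactors [NeZero q] :
    HasSum (fun b : Nat.factoredNumbers q.primeFactors => (b : ℝ)⁻¹) (q / q.totient) := by
  have hsum := hasSum_inv_factoredNumbers q.primeFactors
  rwa [filter_true_of_mem fun _ => Nat.prime_of_mem_primeFactors,
    prod_primeFactors_one_sub_inv_inv] at hsum

theorem summable_div_factoredNumbers [NeZero q] (c : ZMod q → ℂ) :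
    Summable fun b : Nat.factoredNumbers q.primeFactors => c (b : ℕ) / (b : ℕ) := by
  refine .of_norm_bounded
    ((hasSum_inv_factoredNumbers_primeFactors (q := q)).summable.mul_left (∑ a, ‖c a‖)) fun b => ?_
  rw [norm_div, Complex.norm_natCast, div_eq_mul_inv]
  gcongr
  exact single_le_sum (f := fun a => ‖c a‖) (fun _ _ => norm_nonneg _) (mem_univ _)

theorem tendsto_tsum_LSeries_term_one_add {s : Set ℕ} {f : ℕ → ℂ}
    (hf : Summable fun b : s => f b / (b : ℕ)) :
    Tendsto (fun σ : ℝ => ∑' b : s, LSeries.term f (1 + σ) b) (𝓝[>] 0)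
      (𝓝 (∑' b : s, f b / (b : ℕ))) := by
  simp only [LSeries_term_one_add]
  refine tendsto_tsum_of_dominated_convergence hf.norm (fun b => ?_) ?_
  · have hcont : Continuous fun σ : ℝ => max ((b : ℕ) : ℝ) 1 ^ (-σ) :=
      continuous_const.rpow continuous_neg fun _ => Or.inl (by positivity)
    simpa using ((hcont.tendsto 0).mono_left nhdsWithin_le_nhds).smul_const (f b / (b : ℕ))
  · filter_upwards [self_mem_nhdsWithin] with σ hσ b
    rw [norm_smul, Real.norm_of_nonneg (by positivity)]
    exact mul_le_of_le_one_left (norm_nonneg _)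
      (Real.rpow_le_one_of_one_le_of_nonpos (le_max_right _ _) (neg_nonpos.2 (Set.mem_Ioi.1 hσ).le))

theorem tendsto_one_add_ofReal : Tendsto (fun σ : ℝ => (1 + σ : ℂ)) (𝓝[>] 0) (𝓝[≠] 1) := by
  refine tendsto_nhdsWithin_of_tendsto_nhds_of_eventually_within _ ?_ ?_
  · have hcont : Continuous fun σ : ℝ => (1 + σ : ℂ) := by fun_prop
    simpa using (hcont.tendsto 0).mono_left nhdsWithin_le_nhds
  · filter_upwards [self_mem_nhdsWithin] with σ hσ
    simpa using (Set.mem_Ioi.1 hσ).ne'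

theorem exists_tendsto_inv_LFunction_one_add [NeZero q] (χ : DirichletCharacter ℂ q) :
    ∃ l, Tendsto (fun σ : ℝ => (χ.LFunction (1 + σ))⁻¹) (𝓝[>] 0) (𝓝 l) := by
  rcases eq_or_ne χ 1 with rfl | hχ
  · have hres := DirichletCharacter.LFunctionTrivChar₁_apply_one_ne_zero (n := q)
    rw [DirichletCharacter.LFunctionTrivChar₁, Function.update_self] at hres
    have hinv := ((DirichletCharacter.LFunctionTrivChar_residue_one (N := q)).inv₀ hres).comp
      tendsto_one_add_ofReal
    have hzero : Tendsto (fun σ : ℝ => (σ : ℂ)) (𝓝[>] 0) (𝓝 0) := by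
      simpa using (Complex.continuous_ofReal.tendsto 0).mono_left nhdsWithin_le_nhds
    refine ⟨_, (hzero.mul hinv).congr' ?_⟩
    filter_upwards [self_mem_nhdsWithin] with σ hσ
    have hσ0 : (σ : ℂ) ≠ 0 := Complex.ofReal_ne_zero.2 (Set.mem_Ioi.1 hσ).ne'
    rw [Function.comp_apply, add_sub_cancel_left, mul_inv, mul_inv_cancel_left₀ hσ0]
  · exact ⟨_, ((χ.differentiableAt_LFunction 1 (Or.inr hχ)).continuousAt.tendsto.comp
      (tendsto_one_add_ofReal.mono_right nhdsWithin_le_nhds)).inv₀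
        (DirichletCharacter.LFunction_apply_one_ne_zero hχ)⟩

variable [NeZero q]

theorem tsum_factoredNumbers_div_eq_zero_of_tendsto {χ : DirichletCharacter ℂ q} {c : ZMod q → ℂ}
    (hc : ∀ (u : (ZMod q)ˣ) a, c (u * a) = χ u * c a)
    (h0 : Tendsto (fun σ : ℝ => LSeries (c ·) (1 + σ)) (𝓝[>] 0) (𝓝 0)) :
    ∑' b : Nat.factoredNumbers q.primeFactors, c (b : ℕ) / (b : ℕ) = 0 := by
  obtain ⟨l, hl⟩ := exists_tendsto_inv_LFunction_one_add χ
  have hquot := h0.mul hl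
  rw [zero_mul] at hquot
  refine tendsto_nhds_unique
    (tendsto_tsum_LSeries_term_one_add (f := fun n : ℕ => c n) (summable_div_factoredNumbers c))
    (hquot.congr' ?_)
  filter_upwards [self_mem_nhdsWithin] with σ hσ
  have hre : 1 < (1 + σ : ℂ).re := by simpa using hσ
  have hne : χ.LFunction (1 + σ) ≠ 0 := χ.LFunction_ne_zero_of_one_le_re
    (Or.inr fun h => by simp [h] at hre) hre.le
  rw [LSeries_eq_tsum_factoredNumbers_mul_LSeries hc hre, ← χ.LFunction_eq_LSeries hre,
    mul_inv_cancel_right₀ hne]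

/-- The component of `F` on which the units of `ZMod q` act through the character `χ`, scaled so
that the components add up to `φ(q) F`. -/
noncomputable def isotypicPart (χ : DirichletCharacter ℂ q) (F : ZMod q → ℂ) (a : ZMod q) : ℂ :=
  ∑ h : (ZMod q)ˣ, χ (h⁻¹ : (ZMod q)ˣ) * F (h * a)

theorem isotypicPart_unit_mul (χ : DirichletCharacter ℂ q) (F : ZMod q → ℂ) (u : (ZMod q)ˣ)
    (a : ZMod q) : isotypicPart χ F (u * a) = χ u * isotypicPart χ F a := by
  rw [isotypicPart, isotypicPart, mul_sum]
  refine Fintype.sum_equiv (Equiv.mulRight u) _ _ fun h => ?_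
  rw [Equiv.coe_mulRight, ← mul_assoc (χ u), ← map_mul, mul_inv_rev, Units.val_mul,
    Units.mul_inv_cancel_left, Units.val_mul, mul_assoc]

theorem sum_isotypicPart (F : ZMod q → ℂ) (a : ZMod q) :
    ∑ χ, isotypicPart χ F a = q.totient * F a := by
  simp only [isotypicPart]
  rw [sum_comm, sum_eq_single (1 : (ZMod q)ˣ)]
  · rw [← sum_mul, inv_one, Units.val_one, DirichletCharacter.sum_characters_eq, if_pos rfl,
      one_mul]
  · intro h _ hne
    have hinv : ((h⁻¹ : (ZMod q)ˣ) : ZMod q) ≠ 1 := fun h1 => hne (inv_eq_one.1 (Units.ext h1))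
    rw [← sum_mul, DirichletCharacter.sum_characters_eq, if_neg hinv, zero_mul]
  · simp

theorem tendsto_LSeries_isotypicPart_one_add_zero {F : ZMod q → ℂ}
    (hF : ∀ h : (ZMod q)ˣ,
      Tendsto (fun N => ∑ i ∈ range N, F (h * (i : ℕ)) / i) atTop (𝓝 0))
    (χ : DirichletCharacter ℂ q) :
    Tendsto (fun σ : ℝ => LSeries (isotypicPart χ F ·) (1 + σ)) (𝓝[>] 0) (𝓝 0) := by
  refine tendsto_LSeries_one_add_zero ?_ fun σ hσ =>
    ZMod.LSeriesSummable_of_one_lt_re _ (by simpa using hσ)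
  have hsum := tendsto_finsetSum univ fun (h : (ZMod q)ˣ) _ =>
    (hF h).const_mul (χ (h⁻¹ : (ZMod q)ˣ))
  simp only [mul_zero, sum_const_zero] at hsum
  refine hsum.congr fun N => ?_
  simp only [isotypicPart, sum_div, mul_sum, mul_div_assoc]
  exact sum_comm

theorem tsum_factoredNumbers_div_eq_zero {F : ZMod q → ℂ}
    (hF : ∀ h : (ZMod q)ˣ,
      Tendsto (fun N => ∑ i ∈ range N, F (h * (i : ℕ)) / i) atTop (𝓝 0)) :
    ∑' b : Nat.factoredNumbers q.primeFactors, F (b : ℕ) / (b : ℕ) = 0 := by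
  have hsum : ∑ χ, ∑' b : Nat.factoredNumbers q.primeFactors,
      isotypicPart χ F (b : ℕ) / (b : ℕ) = 0 := sum_eq_zero fun χ _ =>
    tsum_factoredNumbers_div_eq_zero_of_tendsto (isotypicPart_unit_mul χ F)
      (tendsto_LSeries_isotypicPart_one_add_zero hF χ)
  rw [← Summable.tsum_finsetSum fun χ _ => summable_div_factoredNumbers (isotypicPart χ F)] at hsum
  simp only [← sum_div, sum_isotypicPart, mul_div_assoc] at hsum
  rw [tsum_mul_left] at hsum
  refine (mul_eq_zero.1 hsum).resolve_left ?_
  exact Nat.cast_ne_zero.2 (Nat.totient_pos.2 (NeZero.pos q)).ne'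

end DirichletSeries

/-! ### Erdősian functions -/

section Erdosian

theorem exists_zmod_lift_of_add_eq {α : Type*} {q : ℕ} [NeZero q] {f : ℕ → α}
    (hf : ∀ n, 1 ≤ n → f (n + q) = f n) : ∃ F : ZMod q → α, ∀ n : ℕ, 1 ≤ n → F n = f n := by
  have hq := NeZero.pos q
  have hmul (n k : ℕ) (hn : 1 ≤ n) : f (n + q * k) = f n := by
    induction k with
    | zero => rw [mul_zero, add_zero]
    | succ k ih => rw [Nat.mul_succ, ← add_assoc, hf _ (by omega), ih]
  refine ⟨fun a => f (a.val + q), fun n hn => ?_⟩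
  beta_reduce
  rw [ZMod.val_natCast, ← hmul _ (n / q) (by omega), add_right_comm, Nat.mod_add_div, hf n hn]

theorem two_mul_norm_le_of_hasSum_of_tsum_eq_zero {ι E : Type*} [NormedAddCommGroup E]
    [CompleteSpace E] {g : ι → E} {w : ι → ℝ} {W : ℝ} (hw : HasSum w W) (hg : ∀ i, ‖g i‖ ≤ w i)
    (h0 : ∑' i, g i = 0) (i : ι) : 2 * ‖g i‖ ≤ W := by
  classical
  have hsum : HasSum g 0 := h0 ▸ (Summable.of_norm_bounded hw.summable hg).hasSum
  have hrest : ‖g i‖ ≤ W - w i := by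
    rw [← norm_neg, ← zero_sub, ← (hasSum_ite_sub_hasSum hsum i).tsum_eq]
    refine tsum_of_norm_bounded (hasSum_ite_sub_hasSum hw i) fun j => ?_
    split_ifs
    · exact norm_zero.le
    · exact hg j
  linarith [hg i]

theorem two_mul_totient_le_of_tendsto_sum_div_zero {q : ℕ} [NeZero q] {F : ZMod q → ℤ}
    (hF : ∀ a, |F a| ≤ 1) (hF1 : |F 1| = 1)
    (h0 : Tendsto (fun N => ∑ i ∈ range N, (F (i : ℕ) : ℂ) / i) atTop (𝓝 0)) :
    2 * q.totient ≤ q := by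
  have hbound (b : ℕ) : ‖(F b : ℂ) / b‖ ≤ (b : ℝ)⁻¹ := by
    rw [norm_div, Complex.norm_intCast, Complex.norm_natCast, div_eq_mul_inv]
    exact mul_le_of_le_one_left (by positivity) (mod_cast hF b)
  have hzero := tsum_factoredNumbers_div_eq_zero (F := fun a : ZMod q => (F a : ℂ))
    (tendsto_sum_unit_mul_div_zero h0)
  have htwo := two_mul_norm_le_of_hasSum_of_tsum_eq_zero hasSum_inv_factoredNumbers_primeFactors
    (fun b => hbound b) hzero
    ⟨1, Nat.mem_factoredNumbers'.2 fun p hp h1 => absurd h1 hp.not_dvd_one⟩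
  have hnorm : |(F 1 : ℝ)| = 1 := mod_cast hF1
  have htot : (0 : ℝ) < q.totient := Nat.cast_pos.2 (Nat.totient_pos.2 (NeZero.pos q))
  rw [Nat.cast_one, Nat.cast_one, div_one, Complex.norm_intCast, hnorm, mul_one,
    le_div_iff₀ htot] at htwo
  exact_mod_cast htwo

theorem tendsto_sum_range_of_tendsto_sum_Icc {F f : ℕ → ℤ} (hFf : ∀ n, 1 ≤ n → F n = f n)
    (hlim : Tendsto (fun N => ∑ n ∈ Icc 1 N, (f n : ℝ) / n) atTop (𝓝 0)) :
    Tendsto (fun N => ∑ i ∈ range N, (F i : ℂ) / i) atTop (𝓝 0) := by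
  rw [← tendsto_add_atTop_iff_nat 1]
  have hcomplex := (Complex.continuous_ofReal.tendsto 0).comp hlim
  rw [Complex.ofReal_zero] at hcomplex
  refine hcomplex.congr fun N => ?_
  rw [sum_range_eq_add_Ico _ N.succ_pos, Nat.cast_zero, div_zero, zero_add, Function.comp_apply,
    Complex.ofReal_sum]
  refine sum_congr rfl fun n hn => ?_
  rw [hFf n (mem_Icc.1 hn).1]
  push_cast
  rfl

theorem abs_eq_one_of_isErdosian {q n : ℕ} {f : ℕ → ℤ} (hf : IsErdosian q f) (hn : 1 ≤ n)
    (hqn : ¬q ∣ n) : |f n| = 1 := by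
  rcases hf.2.1 n hn hqn with h | h <;> simp [h]

theorem abs_le_one_of_isErdosian {q n : ℕ} {f : ℕ → ℤ} (hf : IsErdosian q f) (hn : 1 ≤ n) :
    |f n| ≤ 1 := by
  by_cases hqn : q ∣ n
  · simp [hf.2.2 n hn hqn]
  · exact (abs_eq_one_of_isErdosian hf hn hqn).le

theorem erdosConjectureHolds_of_lt_two_mul_totient {q : ℕ} (hq : 1 < q)
    (h : q < 2 * q.totient) : ErdosConjectureHolds q := by
  rintro ⟨f, hf, hlim⟩
  have : NeZero q := ⟨by omega⟩
  obtain ⟨F, hF⟩ := exists_zmod_lift_of_add_eq hf.1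
  refine h.not_ge (two_mul_totient_le_of_tendsto_sum_div_zero (F := F) (fun a => ?_) ?_
    (tendsto_sum_range_of_tendsto_sum_Icc hF hlim))
  · have hval : ((a.val + q : ℕ) : ZMod q) = a := by simp
    rw [← hval, hF _ (by omega)]
    exact abs_le_one_of_isErdosian hf (by omega)
  · rw [← Nat.cast_one, hF 1 le_rfl]
    exact abs_eq_one_of_isErdosian hf le_rfl (Nat.not_dvd_of_pos_of_lt one_pos hq)

end Erdosian

/-! ### The mean value of `q / φ(q)` -/

section Density

theorem card_filter_mod_eq_and_dvd_le {m d : ℕ} (hmd : m.Coprime d) (a X : ℕ) :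
    #{q ∈ Icc 1 X | q % m = a ∧ d ∣ q} ≤ X / (m * d) + 1 := by
  rw [← card_range (X / (m * d) + 1)]
  refine card_le_card_of_injOn (fun q => q / (m * d)) (fun q hq => ?_) fun q hq r hr hqr => ?_
  · simp only [coe_filter, mem_Icc, Set.mem_ofPred] at hq
    exact mem_coe.2 (mem_range_succ_iff.2 (Nat.div_le_div_right hq.1.2))
  · simp only [coe_filter, mem_Icc, Set.mem_ofPred] at hq hr
    have hmod : q ≡ r [MOD m * d] := (Nat.modEq_and_modEq_iff_modEq_mul hmd).1
      ⟨hq.2.1.trans hr.2.1.symm,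
        ((Nat.modEq_zero_iff_dvd).2 hq.2.2).trans ((Nat.modEq_zero_iff_dvd).2 hr.2.2).symm⟩
    beta_reduce at hqr
    rw [← Nat.div_add_mod q (m * d), ← Nat.div_add_mod r (m * d), hmod, hqr]

theorem div_four_le_card_filter_mod_four_eq_one (X : ℕ) :
    X / 4 ≤ #{q ∈ Icc 1 X | q % 4 = 1} := by
  rw [← card_range (X / 4)]
  refine card_le_card_of_injOn (fun k => 4 * k + 1) (fun k hk => ?_) fun k _ l _ hkl => ?_
  · rw [mem_coe, mem_range] at hk
    rw [mem_coe, mem_filter, mem_Icc]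
    beta_reduce
    omega
  · simpa using hkl

theorem inv_one_sub_inv_eq_one_add_inv {x : ℝ} (hx : 1 < x) :
    (1 - x⁻¹)⁻¹ = 1 + (x - 1)⁻¹ := by
  have hx0 : x ≠ 0 := by positivity
  have hx1 : x - 1 ≠ 0 := (sub_pos.2 hx).ne'
  field_simp
  ring

theorem div_totient_eq_sum_powerset {q : ℕ} (hq : q ≠ 0) :
    (q : ℝ) / q.totient = ∑ S ∈ q.primeFactors.powerset, ∏ p ∈ S, ((p : ℝ) - 1)⁻¹ := by
  have : NeZero q := ⟨hq⟩
  rw [← prod_primeFactors_one_sub_inv_inv, ← prod_one_add]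
  exact prod_congr rfl fun p hp => inv_one_sub_inv_eq_one_add_inv
    (Nat.one_lt_cast.2 (Nat.prime_of_mem_primeFactors hp).one_lt)

theorem sum_div_totient_eq_sum_powerset {A P : Finset ℕ} (hA : 0 ∉ A)
    (hAP : ∀ q ∈ A, q.primeFactors ⊆ P) :
    ∑ q ∈ A, (q : ℝ) / q.totient =
      ∑ S ∈ P.powerset, #{q ∈ A | S ⊆ q.primeFactors} * ∏ p ∈ S, ((p : ℝ) - 1)⁻¹ := by
  have hterm : ∀ q ∈ A, (q : ℝ) / q.totient =
      ∑ S ∈ P.powerset, if S ⊆ q.primeFactors then ∏ p ∈ S, ((p : ℝ) - 1)⁻¹ else 0 := by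
    intro q hq
    rw [div_totient_eq_sum_powerset (ne_of_mem_of_not_mem hq hA), ← sum_filter]
    refine sum_congr (Finset.ext fun S => ?_) fun _ _ => rfl
    rw [mem_filter, mem_powerset, mem_powerset]
    exact ⟨fun hS => ⟨hS.trans (hAP q hq), hS⟩, And.right⟩
  rw [sum_congr rfl hterm, sum_comm]
  refine sum_congr rfl fun S _ => ?_
  rw [← sum_filter, sum_const, nsmul_eq_mul]

theorem inv_pred_nonneg (p : ℕ) (hp : 1 ≤ p) : 0 ≤ ((p : ℝ) - 1)⁻¹ :=
  inv_nonneg.2 (sub_nonneg.2 (Nat.one_le_cast.2 hp))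

theorem sum_div_totient_le {A P : Finset ℕ} {Y : ℝ} (hA : 0 ∉ A) (hP : ∀ p ∈ P, p.Prime)
    (hAP : ∀ q ∈ A, q.primeFactors ⊆ P)
    (hY : ∀ S ⊆ P, (#{q ∈ A | ∏ p ∈ S, p ∣ q} : ℝ) ≤ Y / (∏ p ∈ S, p : ℕ) + 1) :
    ∑ q ∈ A, (q : ℝ) / q.totient ≤
      Y * ∏ p ∈ P, (1 + ((p : ℝ) * (p - 1))⁻¹) + ∏ p ∈ P, (1 + ((p : ℝ) - 1)⁻¹) := by
  rw [sum_div_totient_eq_sum_powerset hA hAP, prod_one_add, prod_one_add, mul_sum,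
    ← sum_add_distrib]
  refine sum_le_sum fun S hS => ?_
  rw [mem_powerset] at hS
  have hcard : #{q ∈ A | S ⊆ q.primeFactors} ≤ #{q ∈ A | ∏ p ∈ S, p ∣ q} :=
    card_le_card <| monotone_filter_right A fun q _ hq =>
      (prod_dvd_prod_of_subset _ _ _ hq).trans (Nat.prod_primeFactors_dvd q)
  have hnonneg : 0 ≤ ∏ p ∈ S, ((p : ℝ) - 1)⁻¹ :=
    prod_nonneg fun p hp => inv_pred_nonneg p (hP p (hS hp)).one_le
  calc (#{q ∈ A | S ⊆ q.primeFactors} : ℝ) * ∏ p ∈ S, ((p : ℝ) - 1)⁻¹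
      ≤ (Y / (∏ p ∈ S, p : ℕ) + 1) * ∏ p ∈ S, ((p : ℝ) - 1)⁻¹ := by
        gcongr
        exact (Nat.cast_le.2 hcard).trans (hY S hS)
    _ = Y * ∏ p ∈ S, ((p : ℝ) * (p - 1))⁻¹ + ∏ p ∈ S, ((p : ℝ) - 1)⁻¹ := by
        simp only [mul_inv, prod_mul_distrib, prod_inv_distrib, Nat.cast_prod]
        ring

/-- The primes among `3, 5, …, 2k + 1`. -/
def oddPrimes (k : ℕ) : Finset ℕ := {p ∈ (range k).image fun i => 2 * i + 3 | p.Prime}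

theorem mem_oddPrimes {k p : ℕ} : p ∈ oddPrimes k ↔ p.Prime ∧ Odd p ∧ p ≤ 2 * k + 1 := by
  simp only [oddPrimes, mem_filter, mem_image, mem_range, and_comm (b := p.Prime)]
  refine and_congr_right fun hp => ⟨?_, fun ⟨⟨j, hj⟩, hle⟩ => ⟨j - 1, ?_⟩⟩
  · rintro ⟨i, hi, rfl⟩
    exact ⟨⟨i + 1, by ring⟩, by omega⟩
  · have := hp.two_le
    omega

theorem prod_oddPrimes_one_add_nonneg {f : ℕ → ℝ} (hf : ∀ p, 1 ≤ p → 0 ≤ f p) (k : ℕ) :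
    0 ≤ ∏ p ∈ oddPrimes k, (1 + f p) :=
  prod_nonneg fun p hp => add_nonneg zero_le_one (hf p (mem_oddPrimes.1 hp).1.one_le)

theorem prod_oddPrimes_succ_one_add_le {f : ℕ → ℝ} (hf : ∀ p, 1 ≤ p → 0 ≤ f p) (k : ℕ) :
    ∏ p ∈ oddPrimes (k + 1), (1 + f p) ≤
      (∏ p ∈ oddPrimes k, (1 + f p)) * (1 + f (2 * k + 3)) := by
  rw [oddPrimes, range_add_one, image_insert, filter_insert, ← oddPrimes]
  split_ifs
  · have hnotMem : 2 * k + 3 ∉ oddPrimes k := fun h => by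
      have := (mem_oddPrimes.1 h).2.2
      omega
    rw [prod_insert hnotMem, mul_comm]
  · exact le_mul_of_one_le_right (prod_oddPrimes_one_add_nonneg hf k)
      (le_add_of_nonneg_right (hf _ (by omega)))

theorem inv_mul_pred_nonneg (p : ℕ) (hp : 1 ≤ p) : 0 ≤ ((p : ℝ) * (p - 1))⁻¹ :=
  inv_nonneg.2 (mul_nonneg p.cast_nonneg (sub_nonneg.2 (Nat.one_le_cast.2 hp)))

theorem one_add_inv_mul_le (k : ℕ) :
    (1 + ((2 * (k : ℝ) + 3) * (2 * k + 2))⁻¹) * ((4 * (k + 1) + 3) / (4 * (k + 1) + 2)) ≤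
      (4 * k + 3) / (4 * k + 2) := by
  rw [← sub_nonneg]
  have hsub : (4 * (k : ℝ) + 3) / (4 * k + 2) - (1 + ((2 * (k : ℝ) + 3) * (2 * k + 2))⁻¹) *
      ((4 * (k + 1) + 3) / (4 * (k + 1) + 2)) =
        ((4 * (k : ℝ) + 3) * ((2 * k + 2) * (2 * k + 3) * (4 * k + 6)) -
          (4 * k + 2) * (4 * k + 7) * ((2 * k + 2) * (2 * k + 3) + 1)) /
          ((4 * k + 2) * ((2 * k + 2) * (2 * k + 3) * (4 * k + 6))) := by
    field_simp
    ring
  rw [hsub]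
  refine div_nonneg ?_ (by positivity)
  ring_nf
  positivity

-- The second factor makes the bound inductive: it decreases to `1` faster than the product grows.
theorem prod_oddPrimes_one_add_inv_mul_pred_mul_le {k : ℕ} (hk : 4 ≤ k) :
    (∏ p ∈ oddPrimes k, (1 + ((p : ℝ) * (p - 1))⁻¹)) * ((4 * k + 3) / (4 * k + 2)) ≤ 1.324 := by
  induction k, hk using Nat.le_induction with
  | base =>
    have hfour : oddPrimes 4 = {3, 5, 7} := by decide
    norm_num [hfour]
  | succ k _ ih =>
    have hcast : (((2 * k + 3 : ℕ) : ℝ) * ((2 * k + 3 : ℕ) - 1))⁻¹ =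
        ((2 * (k : ℝ) + 3) * (2 * k + 2))⁻¹ := by
      push_cast
      ring
    refine le_trans ?_ ih
    calc _ ≤ _ := mul_le_mul_of_nonneg_right
          (prod_oddPrimes_succ_one_add_le inv_mul_pred_nonneg k) (by positivity)
      _ ≤ _ := by
        rw [mul_assoc, hcast, Nat.cast_succ]
        exact mul_le_mul_of_nonneg_left (one_add_inv_mul_le k)
          (prod_oddPrimes_one_add_nonneg inv_mul_pred_nonneg k)

theorem prod_oddPrimes_one_add_inv_mul_pred_le {k : ℕ} (hk : 4 ≤ k) :
    ∏ p ∈ oddPrimes k, (1 + ((p : ℝ) * (p - 1))⁻¹) ≤ 1.324 := by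
  refine le_trans (le_mul_of_one_le_right
    (prod_oddPrimes_one_add_nonneg inv_mul_pred_nonneg k) ?_)
    (prod_oddPrimes_one_add_inv_mul_pred_mul_le hk)
  rw [one_le_div (by positivity)]
  linarith

theorem one_add_inv_sq_le (k : ℕ) :
    (1 + (2 * (k : ℝ) + 2)⁻¹) ^ 2 ≤ (2 * k + 3) / (2 * k + 1) := by
  have hadd : 1 + (2 * (k : ℝ) + 2)⁻¹ = (2 * k + 3) / (2 * k + 2) := by
    field_simp
    ring
  rw [hadd, div_pow, div_le_div_iff₀ (by positivity) (by positivity)]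
  nlinarith [k.cast_nonneg (α := ℝ)]

theorem prod_oddPrimes_one_add_inv_pred_sq_le (k : ℕ) :
    (∏ p ∈ oddPrimes k, (1 + ((p : ℝ) - 1)⁻¹)) ^ 2 ≤ 2 * k + 1 := by
  induction k with
  | zero => simp [oddPrimes]
  | succ k ih =>
    have hcast : (((2 * k + 3 : ℕ) : ℝ) - 1)⁻¹ = (2 * (k : ℝ) + 2)⁻¹ := by
      push_cast
      ring
    calc _ ≤ ((∏ p ∈ oddPrimes k, (1 + ((p : ℝ) - 1)⁻¹)) * (1 + (2 * (k : ℝ) + 2)⁻¹)) ^ 2 := by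
          rw [← hcast]
          exact pow_le_pow_left₀ (prod_oddPrimes_one_add_nonneg inv_pred_nonneg _)
            (prod_oddPrimes_succ_one_add_le inv_pred_nonneg k) 2
      _ ≤ (2 * k + 1) * ((2 * k + 3) / (2 * k + 1)) := by
          rw [mul_pow]
          gcongr
          exact one_add_inv_sq_le k
      _ = 2 * (k + 1 : ℕ) + 1 := by
          rw [mul_div_cancel₀ _ (by positivity)]
          push_cast
          ring

theorem sum_div_totient_mod_four_eq_one_le {X : ℕ} (hX : 4 ≤ X) :
    ∑ q ∈ Icc 1 X with q % 4 = 1, (q : ℝ) / q.totient ≤ 1.324 * (X / 4) + √(2 * X + 1) := by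
  have hprime : ∀ q ∈ ({q ∈ Icc 1 X | q % 4 = 1} : Finset ℕ), q.primeFactors ⊆ oddPrimes X := by
    intro q hq p hp
    rw [mem_filter, mem_Icc] at hq
    have hdvd := Nat.dvd_of_mem_primeFactors hp
    have hle := Nat.le_of_dvd hq.1.1 hdvd
    have hodd : Odd q := Nat.odd_iff.2 (by omega)
    exact mem_oddPrimes.2 ⟨Nat.prime_of_mem_primeFactors hp, hodd.of_dvd_nat hdvd, by omega⟩
  have hcount : ∀ S ⊆ oddPrimes X,
      (#{q ∈ {q ∈ Icc 1 X | q % 4 = 1} | ∏ p ∈ S, p ∣ q} : ℝ) ≤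
        X / 4 / (∏ p ∈ S, p : ℕ) + 1 := by
    intro S hS
    have hodd : Odd (∏ p ∈ S, p) :=
      prod_induction _ Odd (fun _ _ => Odd.mul) odd_one fun p hp => (mem_oddPrimes.1 (hS hp)).2.1
    have hcop : Nat.Coprime 4 (∏ p ∈ S, p) := (Nat.coprime_two_left.2 hodd).pow_left 2
    rw [filter_filter, div_div]
    refine (Nat.cast_le.2 (card_filter_mod_eq_and_dvd_le hcop 1 X)).trans ?_
    rw [Nat.cast_succ]
    gcongr
    exact Nat.cast_div_le.trans_eq (by rw [Nat.cast_mul, Nat.cast_ofNat])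
  refine (sum_div_totient_le (by simp) (fun p hp => (mem_oddPrimes.1 hp).1) hprime hcount).trans ?_
  rw [mul_comm (1.324 : ℝ)]
  gcongr
  · exact prod_oddPrimes_one_add_inv_mul_pred_le hX
  · exact Real.le_sqrt_of_sq_le (prod_oddPrimes_one_add_inv_pred_sq_le X)

theorem card_add_card_two_mul_totient_le_le_sum (A : Finset ℕ) (hA : 0 ∉ A) :
    (#A : ℝ) + #{q ∈ A | 2 * q.totient ≤ q} ≤ ∑ q ∈ A, (q : ℝ) / q.totient := by
  rw [card_eq_sum_ones, card_filter, Nat.cast_sum, Nat.cast_sum, ← sum_add_distrib]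
  refine sum_le_sum fun q hq => ?_
  have hpos : 0 < q := Nat.pos_of_ne_zero (ne_of_mem_of_not_mem hq hA)
  rw [le_div_iff₀ (Nat.cast_pos.2 (Nat.totient_pos.2 hpos))]
  split_ifs with htwo
  · norm_num
    exact_mod_cast htwo
  · simpa using q.totient_le

open scoped Classical in
theorem card_filter_erdosConjectureHolds_ge {X : ℕ} (hX : 4 ≤ X) :
    0.676 * ((X : ℝ) / 4) - √(2 * X + 1) - 3 ≤
      #{q ∈ Icc 1 X | q % 4 = 1 ∧ ErdosConjectureHolds q} := by
  have hsub : ({q ∈ Icc 1 X | q % 4 = 1} : Finset ℕ) ⊆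
      insert 1 ({q ∈ Icc 1 X | q % 4 = 1 ∧ ErdosConjectureHolds q} ∪
        {q ∈ {q ∈ Icc 1 X | q % 4 = 1} | 2 * q.totient ≤ q}) := by
    intro q hq
    by_cases htot : 2 * q.totient ≤ q
    · exact mem_insert_of_mem (mem_union_right _ (mem_filter.2 ⟨hq, htot⟩))
    rw [mem_filter, mem_Icc] at hq
    rcases hq.1.1.eq_or_lt' with rfl | hlt
    · exact mem_insert_self _ _
    · exact mem_insert_of_mem (mem_union_left _ (mem_filter.2 ⟨mem_Icc.2 hq.1, hq.2,
        erdosConjectureHolds_of_lt_two_mul_totient hlt (not_le.1 htot)⟩))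
  have hcard : (#{q ∈ Icc 1 X | q % 4 = 1} : ℝ) ≤
      #{q ∈ Icc 1 X | q % 4 = 1 ∧ ErdosConjectureHolds q} +
        #{q ∈ {q ∈ Icc 1 X | q % 4 = 1} | 2 * q.totient ≤ q} + 1 := by
    exact_mod_cast (card_le_card hsub).trans
      ((card_insert_le _ _).trans (Nat.add_le_add_right (card_union_le _ _) 1))
  have hmarkov := card_add_card_two_mul_totient_le_le_sum {q ∈ Icc 1 X | q % 4 = 1} (by simp)
  have hmean := sum_div_totient_mod_four_eq_one_le hX
  have hlower : (X : ℝ) ≤ 4 * #{q ∈ Icc 1 X | q % 4 = 1} + 3 := by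
    have := div_four_le_card_filter_mod_four_eq_one X
    exact_mod_cast (by omega : X ≤ 4 * #{q ∈ Icc 1 X | q % 4 = 1} + 3)
  linarith

end Density

open scoped Classical in
theorem erdos_true_density_67 :
    0.67 ≤ atTop.liminf (fun X : ℕ =>
      (((Finset.Icc 1 X).filter
        (fun q => q % 4 = 1 ∧ ErdosConjectureHolds q)).card : ℝ) / ((X : ℝ) / 4)) := by
  refine le_liminf_of_le (IsBoundedUnder.isCoboundedUnder_ge ⟨4, ?_⟩) ?_
  · rw [eventually_map]
    filter_upwards [eventually_gt_atTop 0] with X hX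
    have hcard : #{q ∈ Icc 1 X | q % 4 = 1 ∧ ErdosConjectureHolds q} ≤ X :=
      (card_filter_le _ _).trans_eq (Nat.card_Icc 1 X)
    rw [div_le_iff₀ (by positivity)]
    linarith [Nat.cast_le (α := ℝ).2 hcard]
  · filter_upwards [eventually_ge_atTop 3000000] with X hX
    have hXreal : (3000000 : ℝ) ≤ X := mod_cast hX
    have hsqrt : √(2 * (X : ℝ) + 1) ≤ 0.001 * X := by
      rw [Real.sqrt_le_left (by positivity)]
      nlinarith
    rw [le_div_iff₀ (by positivity)]
    linarith [card_filter_erdosConjectureHolds_ge (show 4 ≤ X by omega)]
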